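/- Let f : (C^3,0) → (C,0) be an isolated singularity, nondegenerate in the Kouchnirenko sense, such that Γ^2(f) = ∅ or Γ^2(f) = E_f. Then there exists exactly one segment I ∈ J ∩ Γ^1(f) (with J the family of segments I_1^k=[(0,1,1),(k,0,0)], I_2^k=[(1,0,1),(0,k,0)], I_3^k=[(1,1,0),(0,0,k)], k≥2) and the Łojasiewicz exponent of f equals £_0(f) = m(I) − 1, where m(I) = k is the nonzero coordinate of the intersection point of I with its coordinate axis. -/

import Mathlib

/-!
The theorem combines a combinatorial statement on Newton diagrams with an estimate of `∇f`.

*Combinatorics.* The following properties of the support of an isolated singularity `f` are used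
(`NHyp`, verified in `nHyp_of_isolSing`): it has order at least `2`, it contains points at distance
at most `1` from each axis and points in each coordinate plane, and a compact 2-face has a point `W`
at distance `1` from an axis while its other lattice points lie in a coordinate plane through that
axis. `NHyp.someEdge` derives from this an edge of the family `𝒥`. First, some mixed quadratic
monomial, say `xy`, must occur. If not, an optimal vertex of the linear programme minimising `u₁ +
u₂ + u₃`, or `2u₁ + u₂ + u₃` when `x²` occurs, over the weights `u` that are at least `1` on the
support gives a 2-face (`exists_vertex`), and linear programming duality on that face contradicts
its exceptionality. The case of two squares is excluded by an explicit 2-face. If `xy` is the only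
mixed quadratic monomial, the face of `(1/2, 1/2, 1/k)` with `k` minimal is either an edge or
2-dimensional; in the second case exceptionality leaves few possibilities, and a tilt of the weight
isolates the wanted edge. With further mixed quadratic monomials the argument is similar
(`NHyp.edge_of_mixed`).

*Uniqueness.* If two different segments of `𝒥` were faces, comparing the weights that define them
would make each of the two intercepts larger than the other one (`segJ_unique`).

*The exponent.* Let the edge join `xᵢxⱼ` to `xₗᵏ`, with weight `u` normalised to `1` on it
(`EdgeAt`). Since `uᵢ + uⱼ = 1`, one of `xᵢ²`, `xⱼ²` is absent, so `(∂ᵢf, ∂ⱼf, xₗ)` is a local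
coordinate system (`EdgeAt.chart`), and `∂ᵢf = ∂ⱼf = 0` is a smooth curve parametrised by `xₗ`.
Along it the weighted initial parts `α xⱼ`, `β xᵢ`, `γ xₗᵏ⁻¹` of the partial derivatives show that
`xᵢ`, `xⱼ` are negligible and that `∂ₗf` has the size `|xₗ|ᵏ⁻¹` (`EdgeAt.curve`). Away from the
curve, the distance to it is bounded by a multiple of `‖∇f‖`. Hence `£₀(f) = k - 1`
(`EdgeAt.loj_eq`).
-/

open Finset Filter Topology

/-- The `i`-th partial derivative of `f`. -/
noncomputable def pder {n : ℕ} (i : Fin n) (f : (Fin n → ℂ) → ℂ) : (Fin n → ℂ) → ℂ :=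
  fun z => fderiv ℂ f z (Pi.single i 1)

/-- The iterated partial derivative `∂^ν f` for a multi-index `ν`. -/
noncomputable def mder {n : ℕ} (ν : Fin n → ℕ) (f : (Fin n → ℂ) → ℂ) : (Fin n → ℂ) → ℂ :=
  ((List.finRange n).map fun i => (pder i)^[ν i]).foldr (fun g acc => g acc) f

/-- The support of the Taylor expansion of `f` at `0`. -/
def NSupp {n : ℕ} (f : (Fin n → ℂ) → ℂ) : Set (Fin n → ℕ) :=
  {ν | mder ν f 0 ≠ 0}

/-- The Taylor coefficient `a_ν` of `f` at `0`. -/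
noncomputable def coeffOf {n : ℕ} (f : (Fin n → ℂ) → ℂ) (ν : Fin n → ℕ) : ℂ :=
  mder ν f 0 / ((∏ i, (ν i).factorial : ℕ) : ℂ)

/-- The Newton diagram `Γ₊(f)`: the convex hull of `⋃_{ν ∈ supp f} (ν + ℝ₊ⁿ)`. -/
def NDiag {n : ℕ} (f : (Fin n → ℂ) → ℂ) : Set (Fin n → ℝ) :=
  convexHull ℝ {x | ∃ ν ∈ NSupp f, ∀ i, (ν i : ℝ) ≤ x i}

/-- `l(u, A) = inf {⟨u, v⟩ : v ∈ A}`. -/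
noncomputable def ell {n : ℕ} (u : Fin n → ℝ) (A : Set (Fin n → ℝ)) : ℝ :=
  sInf ((fun v => ∑ i, u i * v i) '' A)

/-- The face `Δ(u, A) = {v ∈ A : ⟨u, v⟩ = l(u, A)}`. -/
def faceOf {n : ℕ} (u : Fin n → ℝ) (A : Set (Fin n → ℝ)) : Set (Fin n → ℝ) :=
  {v | v ∈ A ∧ ∑ i, u i * v i = ell u A}

/-- `S` is a compact face of the Newton diagram of `f` (member of the Newton boundary). -/
def IsCompactFace {n : ℕ} (f : (Fin n → ℂ) → ℂ) (S : Set (Fin n → ℝ)) : Prop :=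
  ∃ u : Fin n → ℝ, (∀ i, 0 < u i) ∧ S = faceOf u (NDiag f)

/-- The dimension of a face, as the rank of the direction of its affine span. -/
noncomputable def faceDim {n : ℕ} (S : Set (Fin n → ℝ)) : ℕ :=
  Module.finrank ℝ (affineSpan ℝ S).direction

/-- `Γ^k(f)`: the `k`-dimensional compact faces of the Newton boundary of `f`. -/
def GammaK {n : ℕ} (f : (Fin n → ℂ) → ℂ) (k : ℕ) : Set (Set (Fin n → ℝ)) :=
  {S | IsCompactFace f S ∧ faceDim S = k}

/-- The quasihomogeneous polynomial `f_S = Σ_{ν ∈ S} a_ν z^ν`. -/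
noncomputable def facePoly {n : ℕ} (f : (Fin n → ℂ) → ℂ) (S : Set (Fin n → ℝ)) :
    (Fin n → ℂ) → ℂ :=
  fun z => ∑' ν : {ν : Fin n → ℕ // (fun i => (ν i : ℝ)) ∈ S}, coeffOf f ν.1 * ∏ i, z i ^ ν.1 i

/-- `f` is nondegenerate in the Kouchnirenko sense. -/
def Nondeg {n : ℕ} (f : (Fin n → ℂ) → ℂ) : Prop :=
  ∀ S, IsCompactFace f S →
    ¬∃ z : Fin n → ℂ, (∀ i, z i ≠ 0) ∧ ∀ i, pder i (facePoly f S) z = 0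

/-- `f` is a singularity: a nonzero holomorphic germ with `f 0 = 0`, `∇f 0 = 0`. -/
def IsSing {n : ℕ} (f : (Fin n → ℂ) → ℂ) : Prop :=
  AnalyticAt ℂ f 0 ∧ (¬∀ᶠ z in 𝓝 0, f z = 0) ∧ f 0 = 0 ∧ ∀ i, pder i f 0 = 0

/-- `f` is an isolated singularity: `∇f` has an isolated zero at `0`. -/
def IsIsolSing {n : ℕ} (f : (Fin n → ℂ) → ℂ) : Prop :=
  IsSing f ∧ ∃ r > (0 : ℝ), ∀ z : Fin n → ℂ, ‖z‖ < r → z ≠ 0 → ∃ i, pder i f z ≠ 0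

/-- Euclidean distance of a point of `ℝ³` to the `i`-th coordinate axis. -/
noncomputable def distAxis (i : Fin 3) (W : Fin 3 → ℝ) : ℝ :=
  Real.sqrt (∑ j ∈ Finset.univ.erase i, (W j) ^ 2)

/-- The vertices (0-dimensional compact faces of the Newton boundary of `f`) lying in `S`. -/
def vtxOf (f : (Fin 3 → ℂ) → ℂ) (S : Set (Fin 3 → ℝ)) : Set (Fin 3 → ℝ) :=
  {A | IsCompactFace f {A} ∧ A ∈ S}

/-- `S` is an exceptional face with respect to the axis `OX_i`: one of its vertices `W` is
at distance `1` from `OX_i` and the remaining vertices constitute a `1`-dimensional face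
lying in a coordinate plane containing `OX_i`. -/
def ExcWrt (f : (Fin 3 → ℂ) → ℂ) (i : Fin 3) (S : Set (Fin 3 → ℝ)) : Prop :=
  ∃ W ∈ vtxOf f S, distAxis i W = 1 ∧
    ∃ T ∈ GammaK f 1, (∃ j, j ≠ i ∧ T ⊆ {x : Fin 3 → ℝ | x j = 0}) ∧
      vtxOf f T = vtxOf f S \ {W}

/-- The set `E_f` of exceptional 2-dimensional faces of `f`. -/
def Ef (f : (Fin 3 → ℂ) → ℂ) : Set (Set (Fin 3 → ℝ)) :=
  {S | S ∈ GammaK f 2 ∧ ∃ i, ExcWrt f i S}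

/-- `I` is the segment `I_j^m` of the family `𝒥` for the given `m`. -/
def segJ (m : ℕ) (I : Set (Fin 3 → ℝ)) : Prop :=
  I = segment ℝ ![0, 1, 1] ![(m : ℝ), 0, 0] ∨
  I = segment ℝ ![1, 0, 1] ![0, (m : ℝ), 0] ∨
  I = segment ℝ ![1, 1, 0] ![0, 0, (m : ℝ)]

/-- `I` belongs to the family `𝒥 = {I_j^k : j = 1,2,3, k ≥ 2}`. -/
def InJ (I : Set (Fin 3 → ℝ)) : Prop := ∃ m : ℕ, 2 ≤ m ∧ segJ m I

/-- The Łojasiewicz exponent `£₀(f) = l₀(∇f)`: the infimum of exponents `α` with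
`‖∇f(z)‖ ≥ C‖z‖^α` near `0`. -/
noncomputable def loj {n : ℕ} (f : (Fin n → ℂ) → ℂ) : ℝ :=
  sInf {α : ℝ | 0 ≤ α ∧ ∃ C > (0 : ℝ), ∃ r > (0 : ℝ), ∀ z : Fin n → ℂ,
    ‖z‖ < r → C * ‖z‖ ^ α ≤ ‖(fun i => pder i f z : Fin n → ℂ)‖}

/-- `m(S)`: the maximal axis intercept of the supporting hyperplane of the face `S`. -/
noncomputable def mFace {n : ℕ} (f : (Fin n → ℂ) → ℂ) (S : Set (Fin n → ℝ)) : ℝ :=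
  sSup {m | ∃ u : Fin n → ℝ, (∀ i, 0 < u i) ∧ S = faceOf u (NDiag f) ∧
    m = ⨆ i, ell u (NDiag f) / u i}

/-! ### Weights on lattice points: the gap and the tilt -/

/-- For a positive weight, the values on lattice points above a threshold `T` stay away from `T`. -/
lemma weight_gap (A : ℕ → ℕ → ℕ → Prop) {a b c : ℝ} (ha : 0 < a) (hb : 0 < b) (hc : 0 < c)
    (T : ℝ) : ∃ η > (0 : ℝ), ∀ x y z, A x y z → T < a * x + b * y + c * z →
      T + η ≤ a * x + b * y + c * z := by
  classical
  let B : ℕ := ⌈(T + 1) / a⌉₊ + ⌈(T + 1) / b⌉₊ + ⌈(T + 1) / c⌉₊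
  let s : Finset (ℕ × ℕ × ℕ) := (range (B + 1) ×ˢ range (B + 1) ×ˢ range (B + 1)).filter
    fun p => T < a * p.1 + b * p.2.1 + c * p.2.2
  have key : ∀ (d : ℝ) (n : ℕ), 0 < d → d * n ≤ T + 1 → n ≤ ⌈(T + 1) / d⌉₊ := by
    intro d n hd h
    have : (n : ℝ) ≤ (T + 1) / d := by rw [le_div_iff₀ hd]; linarith
    exact_mod_cast this.trans (Nat.le_ceil _)
  have mem : ∀ x y z : ℕ, T < a * x + b * y + c * z → a * x + b * y + c * z ≤ T + 1 →
      (x, y, z) ∈ s := by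
    intro x y z h1 h2
    have hx : 0 ≤ a * x := by positivity
    have hy : 0 ≤ b * y := by positivity
    have hz : 0 ≤ c * z := by positivity
    have h1' := key a x ha (by linarith)
    have h2' := key b y hb (by linarith)
    have h3' := key c z hc (by linarith)
    simp only [s, mem_filter, mem_product, mem_range]
    refine ⟨⟨?_, ?_, ?_⟩, h1⟩ <;> simp only [B] <;> omega
  rcases s.eq_empty_or_nonempty with hs | hs
  · refine ⟨1, one_pos, fun x y z _ h => ?_⟩
    by_contra! h2
    have := mem x y z h h2.le
    simp [hs] at this
  · obtain ⟨p, hp, hmin⟩ := s.exists_min_image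
      (fun p => a * p.1 + b * p.2.1 + c * p.2.2) hs
    have hp2 := (mem_filter.1 hp).2
    refine ⟨min 1 (a * p.1 + b * p.2.1 + c * p.2.2 - T), lt_min one_pos (by linarith),
      fun x y z _ h => ?_⟩
    by_cases h2 : a * x + b * y + c * z ≤ T + 1
    · have := hmin _ (mem x y z h h2)
      have := min_le_right 1 (a * p.1 + b * p.2.1 + c * p.2.2 - T)
      simp only at *
      linarith
    · have := min_le_left 1 (a * p.1 + b * p.2.1 + c * p.2.2 - T)
      linarith

/-- Tilting a weight `(a, b, c)` slightly in a direction `(a', b', c')` replaces the set of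
lattice points of minimal weight by its subset on which `(a', b', c')` is minimal. -/
lemma weight_tilt (A : ℕ → ℕ → ℕ → Prop) {a b c : ℝ} (ha : 0 < a) (hb : 0 < b) (hc : 0 < c)
    {T : ℝ} (hT : ∀ x y z, A x y z → T ≤ a * x + b * y + c * z) (a' b' c' m : ℝ)
    (hm : ∀ x y z, A x y z → a * x + b * y + c * z = T → m ≤ a' * x + b' * y + c' * z) :
    ∃ ε₀ > (0 : ℝ), ∀ ε, 0 < ε → ε ≤ ε₀ →
      0 < a + ε * a' ∧ 0 < b + ε * b' ∧ 0 < c + ε * c' ∧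
      ∀ x y z, A x y z →
        T + ε * m ≤ (a + ε * a') * x + (b + ε * b') * y + (c + ε * c') * z ∧
        ((a + ε * a') * x + (b + ε * b') * y + (c + ε * c') * z = T + ε * m →
          a * x + b * y + c * z = T ∧ a' * x + b' * y + c' * z = m) := by
  obtain ⟨η, hη, hgap⟩ := weight_gap A ha hb hc T
  -- `M` bounds the tilt by a multiple of the original weight
  let M := |a'| / a + |b'| / b + |c'| / c
  have hM : 0 ≤ M := by positivity
  have bnd : ∀ (d d' : ℝ), 0 < d → |d'| / d ≤ M → -(M * d) ≤ d' := by
    intro d d' hd h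
    rw [div_le_iff₀ hd] at h
    linarith [neg_abs_le d']
  have hMa : -(M * a) ≤ a' := bnd a a' ha (by
    have : 0 ≤ |b'| / b := by positivity
    have : 0 ≤ |c'| / c := by positivity
    simp only [M]; linarith)
  have hMb : -(M * b) ≤ b' := bnd b b' hb (by
    have : 0 ≤ |a'| / a := by positivity
    have : 0 ≤ |c'| / c := by positivity
    simp only [M]; linarith)
  have hMc : -(M * c) ≤ c' := bnd c c' hc (by
    have : 0 ≤ |a'| / a := by positivity
    have : 0 ≤ |b'| / b := by positivity
    simp only [M]; linarith)
  let D := M + M * |T + η| + |m| + 1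
  have hD : 0 < D := by positivity
  refine ⟨min (1 / (2 * D)) (η / (2 * D)), by positivity, fun ε hε hle => ?_⟩
  have h1 : ε * (2 * D) ≤ 1 := by
    rw [← le_div_iff₀ (by positivity)]; exact hle.trans (min_le_left _ _)
  have h2 : ε * (2 * D) ≤ η := by
    rw [← le_div_iff₀ (by positivity)]; exact hle.trans (min_le_right _ _)
  have hεM : ε * M < 1 := by
    have : ε * M ≤ ε * D := by
      apply mul_le_mul_of_nonneg_left _ hε.le
      have : 0 ≤ M * |T + η| := by positivity
      have := abs_nonneg m
      simp only [D]; linarith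
    nlinarith
  have hpos : ∀ d d' : ℝ, 0 < d → -(M * d) ≤ d' → 0 < d + ε * d' := by
    intro d d' hd h
    have := mul_le_mul_of_nonneg_left h hε.le
    nlinarith
  refine ⟨hpos a a' ha hMa, hpos b b' hb hMb, hpos c c' hc hMc, fun x y z hA => ?_⟩
  rcases (hT x y z hA).eq_or_lt with h | h
  · have := hm x y z hA h.symm
    have h3 := mul_le_mul_of_nonneg_left this hε.le
    refine ⟨by nlinarith, fun h4 => ⟨h.symm, ?_⟩⟩
    have : ε * (a' * x + b' * y + c' * z) = ε * m := by nlinarith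
    exact mul_left_cancel₀ hε.ne' this
  · have hg := hgap x y z hA h
    have h3 : -(M * (a * x + b * y + c * z)) ≤ a' * x + b' * y + c' * z := by
      have e1 := mul_le_mul_of_nonneg_right hMa (Nat.cast_nonneg (α := ℝ) x)
      have e2 := mul_le_mul_of_nonneg_right hMb (Nat.cast_nonneg (α := ℝ) y)
      have e3 := mul_le_mul_of_nonneg_right hMc (Nat.cast_nonneg (α := ℝ) z)
      nlinarith
    have h4 := mul_le_mul_of_nonneg_left h3 hε.le
    have h5 : (1 - ε * M) * (T + η) ≤ (1 - ε * M) * (a * x + b * y + c * z) :=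
      mul_le_mul_of_nonneg_left hg (by linarith)
    have h6 : ε * (M * (T + η)) + ε * m < η := by
      have e1 : M * (T + η) ≤ M * |T + η| := mul_le_mul_of_nonneg_left (le_abs_self _) hM
      have e2 : M * (T + η) + m ≤ D := by simp only [D]; linarith [le_abs_self m]
      have := mul_le_mul_of_nonneg_left e2 hε.le
      nlinarith
    have : T + ε * m < (a + ε * a') * x + (b + ε * b') * y + (c + ε * c') * z := by nlinarith
    exact ⟨this.le, fun h => absurd h this.ne'⟩

/-! ### Combinatorics of Newton diagrams in `ℕ³` with only exceptional compact 2-faces -/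

/-- Set of lattice points `G` (those on a face) with an apex `W` at distance `1` from a coordinate
axis, whose other points all lie in a coordinate plane containing that axis but not `W`. -/
def ExcFace (G : ℕ → ℕ → ℕ → Prop) : Prop :=
  ∃ p : ℕ, 1 ≤ p ∧
    ((G p 1 0 ∧ ∀ x y z, G x y z → y = 0 ∨ (x = p ∧ y = 1 ∧ z = 0)) ∨
     (G p 0 1 ∧ ∀ x y z, G x y z → z = 0 ∨ (x = p ∧ y = 0 ∧ z = 1)) ∨
     (G 1 p 0 ∧ ∀ x y z, G x y z → x = 0 ∨ (x = 1 ∧ y = p ∧ z = 0)) ∨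
     (G 0 p 1 ∧ ∀ x y z, G x y z → z = 0 ∨ (x = 0 ∧ y = p ∧ z = 1)) ∨
     (G 1 0 p ∧ ∀ x y z, G x y z → x = 0 ∨ (x = 1 ∧ y = 0 ∧ z = p)) ∨
     (G 0 1 p ∧ ∀ x y z, G x y z → y = 0 ∨ (x = 0 ∧ y = 1 ∧ z = p)))

/-- What is used about the support `A` of an isolated singularity: order at least `2`, points
close to each axis, points in each coordinate plane, and all compact 2-faces exceptional. A
compact face is given by a positive weight with minimum `1` on `A`; it has dimension 2 when its
lattice points span the whole space. -/
structure NHyp (A : ℕ → ℕ → ℕ → Prop) : Prop where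
  ord : ∀ x y z, A x y z → 2 ≤ x + y + z
  nx : ∃ x y z, A x y z ∧ y + z ≤ 1
  ny : ∃ x y z, A x y z ∧ z + x ≤ 1
  nz : ∃ x y z, A x y z ∧ x + y ≤ 1
  px : ∃ y z, A 0 y z
  py : ∃ x z, A x 0 z
  pz : ∃ x y, A x y 0
  exc : ∀ a b c : ℝ, 0 < a → 0 < b → 0 < c →
    (∀ x y z, A x y z → 1 ≤ a * x + b * y + c * z) →
    (∀ a' b' c' : ℝ, (∀ x y z, A x y z → a * x + b * y + c * z = 1 →
      a' * x + b' * y + c' * z = 0) → a' = 0 ∧ b' = 0 ∧ c' = 0) →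
    ExcFace fun x y z => A x y z ∧ a * x + b * y + c * z = 1

/-- The segment from `(1, 1, 0)` to `(0, 0, k)` is a compact edge: it is cut out by the positive
weight `(a, b, c)`. -/
def EdgeZ (A : ℕ → ℕ → ℕ → Prop) : Prop :=
  ∃ (a b c : ℝ) (k : ℕ), 0 < a ∧ 0 < b ∧ 0 < c ∧ 2 ≤ k ∧ A 1 1 0 ∧ A 0 0 k ∧ a + b = 1 ∧
    c * k = 1 ∧ ∀ x y z, A x y z →
      (x = 1 ∧ y = 1 ∧ z = 0) ∨ (x = 0 ∧ y = 0 ∧ z = k) ∨ 1 < a * x + b * y + c * z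

/-- Some segment of the family `𝒥` is a compact edge. -/
def SomeEdge (A : ℕ → ℕ → ℕ → Prop) : Prop :=
  EdgeZ A ∨ EdgeZ (fun x y z => A z x y) ∨ EdgeZ (fun x y z => A y z x)

lemma NHyp.rot {A : ℕ → ℕ → ℕ → Prop} (h : NHyp A) : NHyp fun x y z => A y z x where
  ord x y z hA := by have := h.ord _ _ _ hA; omega
  nx := by obtain ⟨x, y, z, h1, h2⟩ := h.nz; exact ⟨z, x, y, h1, h2⟩
  ny := by obtain ⟨x, y, z, h1, h2⟩ := h.nx; exact ⟨z, x, y, h1, h2⟩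
  nz := by obtain ⟨x, y, z, h1, h2⟩ := h.ny; exact ⟨z, x, y, h1, h2⟩
  px := by obtain ⟨x, y, h⟩ := h.pz; exact ⟨x, y, h⟩
  py := by obtain ⟨x, y, h⟩ := h.px; exact ⟨y, x, h⟩
  pz := by obtain ⟨x, y, h⟩ := h.py; exact ⟨y, x, h⟩
  exc a b c ha hb hc hF hR := by
    obtain ⟨p, hp, H⟩ := h.exc b c a hb hc ha
      (fun x y z hA => by have := hF z x y hA; linarith)
      (fun b' c' a' h => by
        have := hR a' b' c' (fun x y z hA h1 => by
          have := h y z x hA (by linarith); linarith)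
        tauto)
    refine ⟨p, hp, ?_⟩
    have e : ∀ x y z : ℕ, b * y + c * z + a * x = 1 ↔ a * x + b * y + c * z = 1 := by
      intro x y z; constructor <;> intro h <;> linarith
    simp only [e] at H ⊢
    rcases H with H | H | H | H | H | H
    · exact Or.inr (Or.inr (Or.inr (Or.inl
        ⟨H.1, fun x y z h => by have := H.2 y z x h; tauto⟩)))
    · exact Or.inr (Or.inr (Or.inl
        ⟨H.1, fun x y z h => by have := H.2 y z x h; tauto⟩))
    · exact Or.inr (Or.inr (Or.inr (Or.inr (Or.inr
        ⟨H.1, fun x y z h => by have := H.2 y z x h; tauto⟩))))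
    · exact Or.inr (Or.inr (Or.inr (Or.inr (Or.inl
        ⟨H.1, fun x y z h => by have := H.2 y z x h; tauto⟩))))
    · exact Or.inl
        ⟨H.1, fun x y z h => by have := H.2 y z x h; tauto⟩
    · exact Or.inr (Or.inl
        ⟨H.1, fun x y z h => by have := H.2 y z x h; tauto⟩)

lemma NHyp.swap {A : ℕ → ℕ → ℕ → Prop} (h : NHyp A) : NHyp fun x y z => A y x z where
  ord x y z hA := by have := h.ord _ _ _ hA; omega
  nx := by obtain ⟨x, y, z, h1, h2⟩ := h.ny; exact ⟨y, x, z, h1, by omega⟩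
  ny := by obtain ⟨x, y, z, h1, h2⟩ := h.nx; exact ⟨y, x, z, h1, by omega⟩
  nz := by obtain ⟨x, y, z, h1, h2⟩ := h.nz; exact ⟨y, x, z, h1, by omega⟩
  px := by obtain ⟨x, y, h⟩ := h.py; exact ⟨x, y, h⟩
  py := by obtain ⟨x, y, h⟩ := h.px; exact ⟨x, y, h⟩
  pz := by obtain ⟨x, y, h⟩ := h.pz; exact ⟨y, x, h⟩
  exc a b c ha hb hc hF hR := by
    obtain ⟨p, hp, H⟩ := h.exc b a c hb ha hc
      (fun x y z hA => by have := hF y x z hA; linarith)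
      (fun b' a' c' h => by
        have := hR a' b' c' (fun x y z hA h1 => by
          have := h y x z hA (by linarith); linarith)
        tauto)
    refine ⟨p, hp, ?_⟩
    rcases H with H | H | H | H | H | H
    · exact Or.inr (Or.inr (Or.inl
        ⟨H.1.imp id (fun h => by rw [← h]; ring), fun x y z h => by
          have := H.2 y x z ⟨h.1, by rw [← h.2]; ring⟩; tauto⟩))
    · exact Or.inr (Or.inr (Or.inr (Or.inl
        ⟨H.1.imp id (fun h => by rw [← h]; ring), fun x y z h => by
          have := H.2 y x z ⟨h.1, by rw [← h.2]; ring⟩; tauto⟩)))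
    · exact Or.inl
        ⟨H.1.imp id (fun h => by rw [← h]; ring), fun x y z h => by
          have := H.2 y x z ⟨h.1, by rw [← h.2]; ring⟩; tauto⟩
    · exact Or.inr (Or.inl
        ⟨H.1.imp id (fun h => by rw [← h]; ring), fun x y z h => by
          have := H.2 y x z ⟨h.1, by rw [← h.2]; ring⟩; tauto⟩)
    · exact Or.inr (Or.inr (Or.inr (Or.inr (Or.inr
        ⟨H.1.imp id (fun h => by rw [← h]; ring), fun x y z h => by
          have := H.2 y x z ⟨h.1, by rw [← h.2]; ring⟩; tauto⟩))))
    · exact Or.inr (Or.inr (Or.inr (Or.inr (Or.inl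
        ⟨H.1.imp id (fun h => by rw [← h]; ring), fun x y z h => by
          have := H.2 y x z ⟨h.1, by rw [← h.2]; ring⟩; tauto⟩))))

lemma SomeEdge.of_rot {A : ℕ → ℕ → ℕ → Prop} (h : SomeEdge fun x y z => A y z x) :
    SomeEdge A := by
  rcases h with h | h | h
  exacts [Or.inr (Or.inr h), Or.inl h, Or.inr (Or.inl h)]

lemma EdgeZ.of_swap {A : ℕ → ℕ → ℕ → Prop} (h : EdgeZ fun x y z => A y x z) : EdgeZ A := by
  obtain ⟨a, b, c, k, ha, hb, hc, hk, h1, h2, h3, h4, h5⟩ := h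
  refine ⟨b, a, c, k, hb, ha, hc, hk, h1, h2, by linarith, h4, fun x y z hA => ?_⟩
  rcases h5 y x z hA with h | h | h
  · tauto
  · tauto
  · right; right; linarith

lemma SomeEdge.of_swap {A : ℕ → ℕ → ℕ → Prop} (h : SomeEdge fun x y z => A y x z) :
    SomeEdge A := by
  rcases h with h | h | h
  · exact Or.inl h.of_swap
  · exact Or.inr (Or.inr (EdgeZ.of_swap (A := fun x y z => A y z x) h))
  · exact Or.inr (Or.inl (EdgeZ.of_swap (A := fun x y z => A z x y) h))

/-- Exceptionality of 2-faces, for a weight `(p, q, r) / N` with integer data. -/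
lemma NHyp.exc_nat {A : ℕ → ℕ → ℕ → Prop} (h : NHyp A) {p q r N : ℕ} (hp : 0 < p) (hq : 0 < q)
    (hr : 0 < r) (hN : 0 < N) (hF : ∀ x y z, A x y z → N ≤ p * x + q * y + r * z)
    (hR : ∀ a' b' c' : ℝ, (∀ x y z, A x y z → p * x + q * y + r * z = N →
      a' * x + b' * y + c' * z = 0) → a' = 0 ∧ b' = 0 ∧ c' = 0) :
    ExcFace fun x y z => A x y z ∧ p * x + q * y + r * z = N := by
  have hN' : (0 : ℝ) < N := by exact_mod_cast hN
  have e : ∀ x y z : ℕ, (p / N : ℝ) * x + (q / N : ℝ) * y + (r / N : ℝ) * z =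
      ((p * x + q * y + r * z : ℕ) : ℝ) / N := by
    intro x y z; push_cast; ring
  have e1 : ∀ x y z : ℕ, (p / N : ℝ) * x + (q / N : ℝ) * y + (r / N : ℝ) * z = 1 ↔
      p * x + q * y + r * z = N := by
    intro x y z
    rw [e, div_eq_one_iff_eq hN'.ne']; norm_cast
  have := h.exc (p / N) (q / N) (r / N) (by positivity) (by positivity) (by positivity)
    (fun x y z hA => by
      rw [e, le_div_iff₀ hN', one_mul]; exact_mod_cast hF x y z hA)
    (fun a' b' c' H => hR a' b' c' fun x y z hA h1 => H x y z hA ((e1 x y z).2 h1))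
  simpa only [e1] using this

/-- A tilt in the direction `(s, -s, 0)` isolates the segment from `(1, 1, 0)` to `(0, 0, k)`. -/
lemma edge_nat {A : ℕ → ℕ → ℕ → Prop} {p q r N k : ℕ} (hp : 0 < p) (hq : 0 < q)
    (hr : 0 < r) (hk : 2 ≤ k) (hF : ∀ x y z, A x y z → N ≤ p * x + q * y + r * z)
    (h1 : A 1 1 0) (h2 : A 0 0 k) (hpq : p + q = N) (hrk : r * k = N) (s : ℝ)
    (hs : ∀ x y z, A x y z → p * x + q * y + r * z = N →
      (x = 1 ∧ y = 1 ∧ z = 0) ∨ (x = 0 ∧ y = 0 ∧ z = k) ∨ 0 < s * x + -s * y) : EdgeZ A := by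
  have hN : (0 : ℝ) < N := by
    have : 0 < N := by omega
    exact_mod_cast this
  have e : ∀ x y z : ℕ, (p / N : ℝ) * x + (q / N : ℝ) * y + (r / N : ℝ) * z =
      ((p * x + q * y + r * z : ℕ) : ℝ) / N := by
    intro x y z; push_cast; ring
  have e1 : ∀ x y z : ℕ, (p / N : ℝ) * x + (q / N : ℝ) * y + (r / N : ℝ) * z = 1 ↔
      p * x + q * y + r * z = N := by
    intro x y z
    rw [e, div_eq_one_iff_eq hN.ne']; norm_cast
  obtain ⟨ε, hε, H⟩ := weight_tilt A (a := p / N) (b := q / N) (c := r / N) (T := 1)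
    (by positivity) (by positivity) (by positivity)
    (fun x y z hA => by rw [e, le_div_iff₀ hN, one_mul]; exact_mod_cast hF x y z hA)
    s (-s) 0 0 (fun x y z hA h => by
      rcases hs x y z hA ((e1 x y z).1 h) with ⟨rfl, rfl, rfl⟩ | ⟨rfl, rfl, rfl⟩ | h3
      · simp
      · simp
      · simpa using h3.le)
  obtain ⟨ha, hb, hc, H⟩ := H ε hε le_rfl
  refine ⟨_, _, _, k, ha, hb, hc, hk, h1, h2, ?_, ?_, fun x y z hA => ?_⟩
  · rw [← hpq] at hN ⊢; push_cast at hN ⊢; field_simp; ring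
  · have : (r : ℝ) * k = N := by exact_mod_cast hrk
    rw [mul_zero, add_zero, div_mul_eq_mul_div, this, div_self hN.ne']
  · obtain ⟨h3, h4⟩ := H x y z hA
    simp only [mul_zero, add_zero] at h3 h4 ⊢
    rcases h3.eq_or_lt with h5 | h5
    · obtain ⟨h6, h7⟩ := h4 h5.symm
      rcases hs x y z hA ((e1 x y z).1 h6) with h | h | h
      · exact Or.inl h
      · exact Or.inr (Or.inl h)
      · linarith
    · exact Or.inr (Or.inr h5)

/-- Smallest `k` such that `(0, 0, k)`, or a point `(1, 0, m)`, `(0, 1, m)` with `2m = k`, lies in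
`A`; the weight `(1/2, 1/2, 1/k)` is then at least `1` on `A`, and its face is explicit. -/
lemma NHyp.mid {A : ℕ → ℕ → ℕ → Prop} (h : NHyp A) (hxz : ¬A 1 0 1) (hyz : ¬A 0 1 1) :
    ∃ k, 2 ≤ k ∧ (A 0 0 k ∨ ∃ m, 2 ≤ m ∧ k = 2 * m ∧ (A 1 0 m ∨ A 0 1 m)) ∧
      (∀ n, A 0 0 n → k ≤ n) ∧ (∀ n, A 1 0 n → k ≤ 2 * n) ∧ (∀ n, A 0 1 n → k ≤ 2 * n) ∧
      ∀ x y z, A x y z → 2 * k ≤ k * x + k * y + 2 * z := by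
  classical
  have hm : ∀ m, A 1 0 m ∨ A 0 1 m → 2 ≤ m := by
    intro m hm
    by_contra! hlt
    rcases hm with hm | hm
    · have := h.ord _ _ _ hm
      have : m = 1 := by omega
      exact hxz (this ▸ hm)
    · have := h.ord _ _ _ hm
      have : m = 1 := by omega
      exact hyz (this ▸ hm)
  have hex : ∃ k, A 0 0 k ∨ ∃ m, k = 2 * m ∧ (A 1 0 m ∨ A 0 1 m) := by
    obtain ⟨x, y, z, hA, hxy⟩ := h.nz
    have : (x = 0 ∧ y = 0) ∨ (x = 1 ∧ y = 0) ∨ (x = 0 ∧ y = 1) := by omega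
    rcases this with ⟨rfl, rfl⟩ | ⟨rfl, rfl⟩ | ⟨rfl, rfl⟩
    · exact ⟨z, Or.inl hA⟩
    · exact ⟨2 * z, Or.inr ⟨z, rfl, Or.inl hA⟩⟩
    · exact ⟨2 * z, Or.inr ⟨z, rfl, Or.inr hA⟩⟩
  have hmin := fun n hn => Nat.find_min' hex (m := n) hn
  have hsp := Nat.find_spec hex
  set k := Nat.find hex
  have h0 : ∀ n, A 0 0 n → k ≤ n := fun n hn => hmin n (Or.inl hn)
  have hx : ∀ n, A 1 0 n → k ≤ 2 * n := fun n hn => hmin _ (Or.inr ⟨n, rfl, Or.inl hn⟩)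
  have hy : ∀ n, A 0 1 n → k ≤ 2 * n := fun n hn => hmin _ (Or.inr ⟨n, rfl, Or.inr hn⟩)
  refine ⟨k, ?_, ?_, h0, hx, hy, fun x y z hA => ?_⟩
  · rcases hsp with hsp | ⟨m, hkm, hsp⟩
    · have := h.ord _ _ _ hsp; omega
    · have := hm m hsp; omega
  · exact hsp.imp id fun ⟨m, h1, h2⟩ => ⟨m, hm m h2, h1, h2⟩
  · rcases Nat.lt_or_ge 1 (x + y) with hxy | hxy
    · have : k * 2 ≤ k * (x + y) := Nat.mul_le_mul_left k hxy
      rw [← mul_add]; omega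
    · have : (x = 0 ∧ y = 0) ∨ (x = 1 ∧ y = 0) ∨ (x = 0 ∧ y = 1) := by omega
      rcases this with ⟨rfl, rfl⟩ | ⟨rfl, rfl⟩ | ⟨rfl, rfl⟩
      · have := h0 _ hA; omega
      · have := hx _ hA; omega
      · have := hy _ hA; omega

/-- Two squares `x²`, `y²` without `xz`, `yz` always produce a non-exceptional 2-face. -/
lemma NHyp.no_two_squares {A : ℕ → ℕ → ℕ → Prop} (h : NHyp A) (hx : A 2 0 0) (hy : A 0 2 0)
    (hxz : ¬A 1 0 1) (hyz : ¬A 0 1 1) : False := by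
  obtain ⟨k, hk, hex, h0, h1, h2, hF⟩ := h.mid hxz hyz
  -- a third point of the face, with last coordinate at least 2
  obtain ⟨x, y, z, hA, hz, hw⟩ : ∃ x y z, A x y z ∧ 2 ≤ z ∧ k * x + k * y + 2 * z = 2 * k := by
    rcases hex with hA | ⟨m, hm, rfl, hA | hA⟩
    · exact ⟨0, 0, k, hA, hk, by ring⟩
    · exact ⟨1, 0, m, hA, hm, by ring⟩
    · exact ⟨0, 1, m, hA, hm, by ring⟩
  obtain ⟨p, hp, H⟩ := h.exc_nat (p := k) (q := k) (r := 2) (N := 2 * k) (by omega) (by omega)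
    (by omega) (by omega) hF (fun a' b' c' H => by
      have e1 := H 2 0 0 hx (by ring)
      have e2 := H 0 2 0 hy (by ring)
      have e3 := H x y z hA hw
      have ha : a' = 0 := by push_cast at e1; linarith
      have hb : b' = 0 := by push_cast at e2; linarith
      subst ha hb
      have hz' : (z : ℝ) ≠ 0 := by
        have : z ≠ 0 := by omega
        exact_mod_cast this
      exact ⟨rfl, rfl, by simpa [hz'] using e3⟩)
  rcases H with H | H | H | H | H | H
  · have := H.2 0 2 0 ⟨hy, by ring⟩; omega
  · have := H.2 x y z ⟨hA, hw⟩; omega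
  · have := H.2 2 0 0 ⟨hx, by ring⟩; omega
  · have := H.2 x y z ⟨hA, hw⟩; omega
  · have := H.2 2 0 0 ⟨hx, by ring⟩; omega
  · have := H.2 0 2 0 ⟨hy, by ring⟩; omega

/-! ### A mixed quadratic monomial produces an edge -/

/-- `xy`, `x zᵐ` with `m` minimal, and the plane `x = 0` above the line through `y²`, `z²ᵐ`: the
weight that is constant on `xy`, `x zᵐ` and touches the plane `x = 0` cuts out a 2-face, whose
exceptionality forces a pure power on it. -/
lemma NHyp.edge_of_xzm {A : ℕ → ℕ → ℕ → Prop} (h : NHyp A) {m : ℕ} (hm : 1 ≤ m) (hxy : A 1 1 0)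
    (hxz : A 1 0 m) (hmin : ∀ n, A 1 0 n → m ≤ n) (hN : ∀ y z, A 0 y z → 2 * m < m * y + z) :
    SomeEdge A := by
  classical
  obtain ⟨q, y₀, z₀, hA₀, hN₀, hmq, hle⟩ : ∃ q y₀ z₀, A 0 y₀ z₀ ∧ m * y₀ + z₀ = m + q ∧ m < q ∧
      ∀ y z, A 0 y z → m + q ≤ m * y + z := by
    have hex : ∃ N, ∃ y z, A 0 y z ∧ m * y + z = N := by
      obtain ⟨y, z, hA⟩ := h.px
      exact ⟨_, y, z, hA, rfl⟩
    have hle : ∀ y z, A 0 y z → Nat.find hex ≤ m * y + z :=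
      fun y z hA => Nat.find_min' hex ⟨y, z, hA, rfl⟩
    obtain ⟨y₀, z₀, hA₀, hN₀⟩ := Nat.find_spec hex
    have := hN y₀ z₀ hA₀
    exact ⟨Nat.find hex - m, y₀, z₀, hA₀, by omega, by omega,
      fun y z hA => by have := hle y z hA; omega⟩
  have hF : ∀ x y z, A x y z → m + q ≤ q * x + m * y + 1 * z ∧
      (q * x + m * y + 1 * z = m + q → x = 0 ∨ (x = 1 ∧ y = 1 ∧ z = 0) ∨
        (x = 1 ∧ y = 0 ∧ z = m)) := by
    intro x y z hA
    rcases Nat.lt_or_ge x 2 with hx | hx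
    · interval_cases x
      · exact ⟨by have := hle y z hA; omega, fun _ => Or.inl rfl⟩
      · rcases Nat.eq_zero_or_pos y with rfl | hy
        · have := hmin z hA
          exact ⟨by omega, fun h => by omega⟩
        · have : m * 1 ≤ m * y := Nat.mul_le_mul_left m hy
          refine ⟨by omega, fun h => ?_⟩
          have hy1 : m * y = m * 1 := by omega
          have := Nat.eq_of_mul_eq_mul_left hm hy1
          omega
    · have : q * 2 ≤ q * x := Nat.mul_le_mul_left q hx
      exact ⟨by omega, fun h => by omega⟩
  obtain ⟨p, hp, H⟩ := h.exc_nat (p := q) (q := m) (r := 1) (N := m + q) (by omega) hm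
    one_pos (by omega) (fun x y z hA => (hF x y z hA).1) (fun a' b' c' H => by
      have e1 := H 1 1 0 hxy (by ring)
      have e2 := H 1 0 m hxz (by ring)
      have e3 := H 0 y₀ z₀ hA₀ (by omega)
      push_cast at e1 e2 e3
      have hm' : (0 : ℝ) < m := by exact_mod_cast hm
      have hb : b' = -a' := by linarith
      have hc : m * c' = -a' := by linarith
      have hsum : (m : ℝ) * y₀ + z₀ = m + q := by exact_mod_cast hN₀
      have ha : a' * (m + q) = 0 := by
        rw [← hsum]; subst hb
        linear_combination (-m) * e3 + z₀ * hc
      have ha' : a' = 0 := by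
        rcases mul_eq_zero.1 ha with h | h
        · exact h
        · have : (0 : ℝ) ≤ q := Nat.cast_nonneg q
          linarith
      subst ha'
      refine ⟨rfl, by simpa using hb, ?_⟩
      rcases mul_eq_zero.1 (hc.trans neg_zero) with h | h
      · exact absurd h hm'.ne'
      · exact h)
  have f1 : q * 1 + m * 1 + 1 * 0 = m + q := by ring
  have f2 : q * 1 + m * 0 + 1 * m = m + q := by ring
  have f3 : q * 0 + m * y₀ + 1 * z₀ = m + q := by omega
  rcases H with H | H | H | H | H | H
  · have hy₀ : y₀ = 0 := by have := H.2 _ _ _ ⟨hA₀, f3⟩; omega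
    subst hy₀
    have hz₀ : z₀ = m + q := by omega
    subst hz₀
    refine Or.inl (edge_nat (p := q) (q := m) (r := 1) (N := m + q) (k := m + q) (by omega) hm
      one_pos (by omega) (fun x y z hA => (hF x y z hA).1) hxy hA₀ (by omega) (by omega) 1
      fun x y z hA hw => ?_)
    rcases (hF x y z hA).2 hw with rfl | h1 | ⟨rfl, rfl, rfl⟩
    · have : y = 0 := by have := H.2 _ _ _ ⟨hA, hw⟩; omega
      subst this
      exact Or.inr (Or.inl ⟨rfl, rfl, by omega⟩)
    · exact Or.inl h1
    · right; right; norm_num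
  · have hm1 : m = 1 := by have := H.2 _ _ _ ⟨hxz, f2⟩; omega
    subst hm1
    have hz₀ : z₀ = 0 := by have := H.2 _ _ _ ⟨hA₀, f3⟩; omega
    subst hz₀
    have hy₀ : y₀ = 1 + q := by omega
    subst hy₀
    refine Or.inr (Or.inr (edge_nat (A := fun x y z => A y z x) (p := 1) (q := q) (r := 1)
      (N := 1 + q) (k := 1 + q) one_pos (by omega)
      one_pos (by omega) (fun x y z hA => by have := (hF _ _ _ hA).1; omega) hxz hA₀ (by omega)
      (by omega) (-1) fun x y z hA hw => ?_))
    have hw' : q * y + 1 * z + 1 * x = 1 + q := by omega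
    rcases (hF _ _ _ hA).2 hw' with rfl | ⟨rfl, rfl, rfl⟩ | h1
    · have : x = 0 := by have := H.2 _ _ _ ⟨hA, hw'⟩; omega
      subst this
      exact Or.inr (Or.inl ⟨rfl, rfl, by omega⟩)
    · right; right; norm_num
    · omega
  · have := H.2 _ _ _ ⟨hxz, f2⟩; omega
  · have := H.2 _ _ _ ⟨hxz, f2⟩; omega
  · have := H.2 _ _ _ ⟨hxy, f1⟩; omega
  · have := H.2 _ _ _ ⟨hxy, f1⟩; omega

/-- `xy` and `z²` both occur: if there is a further quadratic monomial, the face of degree `2` is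
2-dimensional, and by its exceptionality a tilt isolates the segment joining `xy` and `z²`. -/
lemma NHyp.edge_of_zz {A : ℕ → ℕ → ℕ → Prop} (h : NHyp A) (hxy : A 1 1 0) (hzz : A 0 0 2) :
    EdgeZ A := by
  have hF : ∀ x y z, A x y z → 2 ≤ 1 * x + 1 * y + 1 * z := fun x y z hA => by
    have := h.ord x y z hA; omega
  have key : (∀ a' b' c' : ℝ, (∀ x y z, A x y z → 1 * x + 1 * y + 1 * z = 2 →
      a' * x + b' * y + c' * z = 0) → a' = 0 ∧ b' = 0 ∧ c' = 0) →
      EdgeZ A := by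
    intro hR
    obtain ⟨p, hp, H⟩ := h.exc_nat (p := 1) (q := 1) (r := 1) (N := 2) one_pos one_pos one_pos
      two_pos hF (by simpa using hR)
    rcases H with H | H | H | H | H | H
    · refine edge_nat (p := 1) (q := 1) (r := 1) (N := 2) (k := 2) one_pos one_pos one_pos le_rfl
        hF hxy hzz rfl rfl 1 fun x y z hA hw => ?_
      have := H.2 1 1 0 ⟨hxy, rfl⟩
      have h2 := H.2 x y z ⟨hA, hw⟩
      have : (x = 1 ∧ y = 1 ∧ z = 0) ∨ (x = 0 ∧ y = 0 ∧ z = 2) ∨ (1 ≤ x ∧ y = 0) := by omega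
      refine this.imp id (Or.imp id fun ⟨h3, h4⟩ => ?_)
      have : (1 : ℝ) ≤ x := by exact_mod_cast h3
      subst h4
      norm_num; omega
    · have := H.2 0 0 2 ⟨hzz, rfl⟩; omega
    · refine edge_nat (p := 1) (q := 1) (r := 1) (N := 2) (k := 2) one_pos one_pos one_pos le_rfl
        hF hxy hzz rfl rfl (-1) fun x y z hA hw => ?_
      have := H.2 1 1 0 ⟨hxy, rfl⟩
      have h2 := H.2 x y z ⟨hA, hw⟩
      have : (x = 1 ∧ y = 1 ∧ z = 0) ∨ (x = 0 ∧ y = 0 ∧ z = 2) ∨ (1 ≤ y ∧ x = 0) := by omega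
      refine this.imp id (Or.imp id fun ⟨h3, h4⟩ => ?_)
      have : (1 : ℝ) ≤ y := by exact_mod_cast h3
      subst h4
      norm_num; omega
    · have := H.2 0 0 2 ⟨hzz, rfl⟩; omega
    · have := H.2 1 1 0 ⟨hxy, rfl⟩
      have := H.2 0 0 2 ⟨hzz, rfl⟩
      omega
    · have := H.2 1 1 0 ⟨hxy, rfl⟩
      have := H.2 0 0 2 ⟨hzz, rfl⟩
      omega
  by_cases hq : A 2 0 0 ∨ A 0 2 0 ∨ A 1 0 1 ∨ A 0 1 1
  · refine key fun a' b' c' H => ?_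
    have e1 := H 1 1 0 hxy rfl
    have e2 := H 0 0 2 hzz rfl
    push_cast at e1 e2
    rcases hq with hq | hq | hq | hq <;>
    · have e3 := H _ _ _ hq rfl
      push_cast at e3
      refine ⟨?_, ?_, ?_⟩ <;> linarith
  · refine edge_nat (p := 1) (q := 1) (r := 1) (N := 2) (k := 2) one_pos one_pos one_pos le_rfl
      hF hxy hzz rfl rfl 0 fun x y z hA hw => ?_
    push Not at hq
    have : (x = 1 ∧ y = 1 ∧ z = 0) ∨ (x = 0 ∧ y = 0 ∧ z = 2) ∨ (x = 2 ∧ y = 0 ∧ z = 0) ∨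
        (x = 0 ∧ y = 2 ∧ z = 0) ∨ (x = 1 ∧ y = 0 ∧ z = 1) ∨ (x = 0 ∧ y = 1 ∧ z = 1) := by omega
    refine this.imp id (Or.imp id fun h => ?_)
    rcases h with ⟨rfl, rfl, rfl⟩ | ⟨rfl, rfl, rfl⟩ | ⟨rfl, rfl, rfl⟩ | ⟨rfl, rfl, rfl⟩
    exacts [absurd hA hq.1, absurd hA hq.2.1, absurd hA hq.2.2.1, absurd hA hq.2.2.2]

/-- `xy` occurs, `y²` does not, and the face of the weight `(1/2, 1/2, 1/k)` contains `zᵏ` or some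
`x zᵐ`, but no `y zᵐ`. If `zᵏ` is there, the segment from `xy` to `zᵏ` is an edge; otherwise the
weight has to be changed as in `NHyp.edge_of_xzm`. -/
lemma NHyp.edge_of_xy_aux {A : ℕ → ℕ → ℕ → Prop} (h : NHyp A) (hxy : A 1 1 0) (hyy : ¬A 0 2 0)
    {k : ℕ} (hk : 2 ≤ k)
    (h0 : ∀ n, A 0 0 n → k ≤ n) (hy : ∀ n, A 0 1 n → k < 2 * n)
    (hx : ∀ n, A 1 0 n → k ≤ 2 * n)
    (hF : ∀ x y z, A x y z → 2 * k ≤ k * x + k * y + 2 * z)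
    (hex : A 0 0 k ∨ ∃ m, 2 ≤ m ∧ k = 2 * m ∧ A 1 0 m) : SomeEdge A := by
  by_cases hz : A 0 0 k
  · refine Or.inl (edge_nat (p := k) (q := k) (r := 2) (N := 2 * k) (k := k) (by omega) (by omega)
      two_pos hk hF hxy hz (by omega) (by omega) 1 fun x y z hA hw => ?_)
    have : x + y ≤ 2 := by
      by_contra! hlt
      have : k * 3 ≤ k * (x + y) := Nat.mul_le_mul_left k hlt
      rw [mul_add] at this; omega
    have : (x = 0 ∧ y = 0) ∨ (x = 0 ∧ y = 1) ∨ (x = 0 ∧ y = 2) ∨ (x = 1 ∧ y = 1) ∨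
        (1 ≤ x ∧ y = 0) := by omega
    rcases this with ⟨rfl, rfl⟩ | ⟨rfl, rfl⟩ | ⟨rfl, rfl⟩ | ⟨rfl, rfl⟩ | ⟨hx1, rfl⟩
    · exact Or.inr (Or.inl ⟨rfl, rfl, by omega⟩)
    · have := hy _ hA; omega
    · have : z = 0 := by omega
      subst this; exact absurd hA hyy
    · exact Or.inl ⟨rfl, rfl, by omega⟩
    · have : (1 : ℝ) ≤ x := by exact_mod_cast hx1
      right; right; norm_num; omega
  · obtain ⟨m, hm, rfl, hA⟩ := hex.resolve_left hz
    refine h.edge_of_xzm (by omega) hxy hA (fun n hn => by have := hx n hn; omega)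
      fun y z hA => ?_
    rcases Nat.lt_or_ge y 2 with hy2 | hy2
    · interval_cases y
      · have := h0 _ hA
        have : z ≠ 2 * m := fun h => hz (h ▸ hA)
        omega
      · have := hy _ hA; omega
    · rcases Nat.eq_or_lt_of_le hy2 with rfl | hy3
      · have : z ≠ 0 := fun h => hyy (h ▸ hA)
        omega
      · have : m * 3 ≤ m * y := Nat.mul_le_mul_left m hy3
        omega

/-- The only mixed quadratic monomial is `xy`. If `y zᵐ` lies on the face of `NHyp.mid`, then neither
`x²` nor `x zᵐ` does, by exceptionality, so the roles of `x` and `y` may be exchanged. -/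
lemma NHyp.edge_of_xy {A : ℕ → ℕ → ℕ → Prop} (h : NHyp A) (hxy : A 1 1 0) (hxz : ¬A 1 0 1)
    (hyz : ¬A 0 1 1) : SomeEdge A := by
  -- at most one of the squares occurs; the other one may be assumed to be `x²`
  wlog hyy : ¬A 0 2 0 generalizing A
  · rw [not_not] at hyy
    exact SomeEdge.of_swap (this h.swap hxy hyz hxz fun hxx => h.no_two_squares hxx hyy hxz hyz)
  obtain ⟨k, hk, hex, h0, hx, hy, hF⟩ := h.mid hxz hyz
  by_cases hyk : ∃ m, k = 2 * m ∧ A 0 1 m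
  swap
  · refine h.edge_of_xy_aux hxy hyy hk h0 (fun n hn => lt_of_le_of_ne (hy n hn)
      fun e => hyk ⟨n, e, hn⟩) hx hF (hex.imp id fun ⟨m, h1, h2, h3⟩ => ⟨m, h1, h2, ?_⟩)
    exact h3.resolve_right fun h4 => hyk ⟨m, h2, h4⟩
  obtain ⟨m, rfl, hym⟩ := hyk
  have hm : 2 ≤ m := by
    have := h.ord _ _ _ hym
    have : m ≠ 1 := fun e => hyz (e ▸ hym)
    omega
  -- neither `x²` nor `x zᵐ` can lie on the face next to `xy` and `y zᵐ`
  have key : ∀ x z, 1 ≤ x → A x 0 z → 2 * m * x + 2 * m * 0 + 2 * z = 2 * (2 * m) → False := by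
    intro x z hx1 hA hw
    obtain ⟨p, hp, H⟩ := h.exc_nat (p := 2 * m) (q := 2 * m) (r := 2) (N := 2 * (2 * m))
      (by omega) (by omega) two_pos (by omega) hF (fun a' b' c' H => by
        have e1 := H 1 1 0 hxy (by ring)
        have e2 := H 0 1 m hym (by ring)
        have e3 := H x 0 z hA hw
        push_cast at e1 e2 e3
        have hw' : (m : ℝ) * x + z = 2 * m := by
          have : m * x + z = 2 * m := by nlinarith
          exact_mod_cast this
        have hm' : (0 : ℝ) < m := by
          have : 0 < m := by omega
          exact_mod_cast this
        have ha : a' = -b' := by linarith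
        have hc : m * c' = -b' := by linarith
        subst ha
        have hb : b' * (2 * m) = 0 := by
          linear_combination (-m) * e3 + z * hc - b' * hw'
        have hb' : b' = 0 := by
          rcases mul_eq_zero.1 hb with h | h
          · exact h
          · linarith
        subst hb'
        refine ⟨by simp, rfl, ?_⟩
        rcases mul_eq_zero.1 (hc.trans neg_zero) with h | h
        · exact absurd h hm'.ne'
        · exact h)
    have g1 : 2 * m * 1 + 2 * m * 1 + 2 * 0 = 2 * (2 * m) := by ring
    have g2 : 2 * m * 0 + 2 * m * 1 + 2 * m = 2 * (2 * m) := by ring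
    rcases H with H | H | H | H | H | H
    · have := H.2 _ _ _ ⟨hym, g2⟩; omega
    · have := H.2 _ _ _ ⟨hym, g2⟩; omega
    · have := H.2 _ _ _ ⟨hxy, g1⟩
      have := H.2 _ _ _ ⟨hA, hw⟩
      omega
    · have := H.2 _ _ _ ⟨hym, g2⟩; omega
    · have := H.2 _ _ _ ⟨hxy, g1⟩; omega
    · have := H.2 _ _ _ ⟨hxy, g1⟩; omega
  have hxx : ¬A 2 0 0 := fun hA => key 2 0 (by omega) hA (by ring)
  refine SomeEdge.of_swap (h.swap.edge_of_xy_aux hxy hxx hk h0 (fun n hn =>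
    lt_of_le_of_ne (hx n hn) fun e => key 1 n le_rfl hn (by omega)) hy
    (fun x y z hA => by have := hF y x z hA; omega) (Or.inr ⟨m, hm, rfl, hym⟩))

/-- A mixed quadratic monomial forces an edge of the family `𝒥`. -/
lemma NHyp.edge_of_mixed {A : ℕ → ℕ → ℕ → Prop} (h : NHyp A) (hxy : A 1 1 0) : SomeEdge A := by
  by_cases hzz : A 0 0 2
  · exact Or.inl (h.edge_of_zz hxy hzz)
  wlog hyz : ¬A 0 1 1 generalizing A
  · rw [not_not] at hyz
    by_cases hxz : A 1 0 1
    · -- `xy`, `xz`, `yz` span the face of degree `2`, and it is not exceptional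
      by_cases hxx : A 2 0 0
      · exact Or.inr (Or.inl ((h.rot.rot).edge_of_zz (A := fun x y z => A z x y) hyz hxx))
      by_cases hyy : A 0 2 0
      · exact Or.inr (Or.inr (h.rot.edge_of_zz (A := fun x y z => A y z x) hxz hyy))
      exfalso
      obtain ⟨p, hp, H⟩ := h.exc_nat (p := 1) (q := 1) (r := 1) (N := 2) one_pos one_pos one_pos
        two_pos (fun x y z hA => by have := h.ord x y z hA; omega) (fun a' b' c' H => by
          have e1 := H 1 1 0 hxy rfl
          have e2 := H 1 0 1 hxz rfl
          have e3 := H 0 1 1 hyz rfl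
          push_cast at e1 e2 e3
          refine ⟨?_, ?_, ?_⟩ <;> linarith)
      rcases H with H | H | H | H | H | H <;>
      · have := H.2 _ _ _ ⟨hxy, rfl⟩
        have := H.2 _ _ _ ⟨hxz, rfl⟩
        have := H.2 _ _ _ ⟨hyz, rfl⟩
        omega
    · exact SomeEdge.of_swap (this h.swap hxy hzz hxz)
  by_cases hxz : A 1 0 1
  · by_cases hyy : A 0 2 0
    · exact Or.inr (Or.inr (h.rot.edge_of_zz (A := fun x y z => A y z x) hxz hyy))
    refine h.edge_of_xzm le_rfl hxy hxz (fun n hn => ?_) fun y z hA => ?_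
    · have := h.ord _ _ _ hn; omega
    · have := h.ord _ _ _ hA
      by_contra! hlt
      have hy : y ≤ 2 := by omega
      have : (y = 0 ∧ z = 2) ∨ (y = 1 ∧ z = 1) ∨ (y = 2 ∧ z = 0) := by omega
      rcases this with ⟨rfl, rfl⟩ | ⟨rfl, rfl⟩ | ⟨rfl, rfl⟩
      exacts [hzz hA, hyz hA, hyy hA]
  · exact h.edge_of_xy hxy hxz hyz

/-! ### A mixed quadratic monomial exists -/

/-- A vertex of the optimal set of the linear programme to minimise `⟨w, u⟩` over the nonnegative
weights `u` with values at least `1` on `A`. If no boundary weight reaches the level `C`, the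
vertex is a positive weight; its face spans the whole space, and by duality `w` lies in the cone
over the face. -/
lemma exists_vertex (A : ℕ → ℕ → ℕ → Prop) {w₁ w₂ w₃ C : ℝ} (h₁ : 0 < w₁) (h₂ : 0 < w₂)
    (h₃ : 0 < w₃)
    (hne : ∃ a b c : ℝ, 0 ≤ a ∧ 0 ≤ b ∧ 0 ≤ c ∧ (∀ x y z, A x y z → 1 ≤ a * x + b * y + c * z) ∧
      w₁ * a + w₂ * b + w₃ * c ≤ C)
    (hbd : ∀ a b c : ℝ, 0 ≤ a → 0 ≤ b → 0 ≤ c → (∀ x y z, A x y z → 1 ≤ a * x + b * y + c * z) →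
      a = 0 ∨ b = 0 ∨ c = 0 → C < w₁ * a + w₂ * b + w₃ * c) :
    ∃ a b c : ℝ, 0 < a ∧ 0 < b ∧ 0 < c ∧ (∀ x y z, A x y z → 1 ≤ a * x + b * y + c * z) ∧
      (∀ a' b' c' : ℝ, (∀ x y z, A x y z → a * x + b * y + c * z = 1 →
        a' * x + b' * y + c' * z = 0) → a' = 0 ∧ b' = 0 ∧ c' = 0) ∧
      (∀ a' b' c' : ℝ, (∀ x y z, A x y z → a * x + b * y + c * z = 1 →
        0 ≤ a' * x + b' * y + c' * z) → 0 ≤ w₁ * a' + w₂ * b' + w₃ * c') := by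
  let φ : ℝ × ℝ × ℝ → ℝ := fun p => w₁ * p.1 + w₂ * p.2.1 + w₃ * p.2.2
  have hφ : Continuous φ := by fun_prop
  let K : Set (ℝ × ℝ × ℝ) := {p | 0 ≤ p.1 ∧ 0 ≤ p.2.1 ∧ 0 ≤ p.2.2 ∧
    (∀ x y z : ℕ, A x y z → 1 ≤ p.1 * x + p.2.1 * y + p.2.2 * z) ∧ φ p ≤ C}
  have hKcl : IsClosed K := by
    simp only [K, Set.ofPred_and, Set.ofPred_forall]
    refine (isClosed_le (by fun_prop) (by fun_prop)).inter
      ((isClosed_le (by fun_prop) (by fun_prop)).inter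
      ((isClosed_le (by fun_prop) (by fun_prop)).inter
      (IsClosed.inter ?_ (isClosed_le (by fun_prop) (by fun_prop)))))
    exact isClosed_iInter fun x => isClosed_iInter fun y => isClosed_iInter fun z =>
      isClosed_iInter fun _ => isClosed_le (by fun_prop) (by fun_prop)
  have hKc : IsCompact K := by
    refine (isCompact_Icc (a := (0, 0, 0)) (b := (C / w₁, C / w₂, C / w₃))).of_isClosed_subset
      hKcl ?_
    rintro ⟨a, b, c⟩ ⟨ha, hb, hc, -, hC⟩
    simp only [φ] at ha hb hc hC
    have := mul_nonneg h₁.le ha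
    have := mul_nonneg h₂.le hb
    have := mul_nonneg h₃.le hc
    refine ⟨⟨ha, hb, hc⟩, ?_, ?_, ?_⟩
    all_goals
      simp only
      rw [le_div_iff₀ (by assumption)]
      linarith
  have hKne : K.Nonempty := by
    obtain ⟨a, b, c, h⟩ := hne
    exact ⟨(a, b, c), h⟩
  obtain ⟨p₀, hp₀, hmin⟩ := hKc.exists_isMinOn hKne hφ.continuousOn
  let M : Set (ℝ × ℝ × ℝ) := K ∩ {p | φ p ≤ φ p₀}
  have hMc : IsCompact M := hKc.inter_right (isClosed_le hφ continuous_const)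
  obtain ⟨⟨a, b, c⟩, hp⟩ := hMc.extremePoints_nonempty ⟨p₀, hp₀, le_refl (φ p₀)⟩
  obtain ⟨⟨⟨ha, hb, hc, hF, hC⟩, hle⟩, hext⟩ := mem_extremePoints.1 hp
  simp only [φ] at ha hb hc hF hC
  have hpos : 0 < a ∧ 0 < b ∧ 0 < c := by
    have := hbd a b c ha hb hc hF
    refine ⟨ha.lt_of_ne fun h => ?_, hb.lt_of_ne fun h => ?_, hc.lt_of_ne fun h => ?_⟩
    · have := this (Or.inl h.symm); linarith
    · have := this (Or.inr (Or.inl h.symm)); linarith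
    · have := this (Or.inr (Or.inr h.symm)); linarith
  obtain ⟨ha, hb, hc⟩ := hpos
  have hmin' : ∀ p ∈ K, φ (a, b, c) ≤ φ p := fun p hp => (show φ _ ≤ φ p₀ from hle).trans (hmin hp)
  -- moving in a direction nonnegative on the face keeps the weight feasible
  have tilt : ∀ a' b' c' : ℝ, (∀ x y z, A x y z → a * x + b * y + c * z = 1 →
      0 ≤ a' * x + b' * y + c' * z) → ∃ ε₀ > (0 : ℝ), ∀ ε, 0 < ε → ε ≤ ε₀ →
        φ (a + ε * a', b + ε * b', c + ε * c') ≤ C →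
        (a + ε * a', b + ε * b', c + ε * c') ∈ K := by
    intro a' b' c' h
    obtain ⟨ε₀, h0, H⟩ := weight_tilt A ha hb hc hF a' b' c' 0 h
    refine ⟨ε₀, h0, fun ε h1 h2 h3 => ?_⟩
    obtain ⟨g1, g2, g3, g4⟩ := H ε h1 h2
    refine ⟨g1.le, g2.le, g3.le, fun x y z hA => ?_, h3⟩
    simpa using (g4 x y z hA).1
  have hcone : ∀ a' b' c' : ℝ, (∀ x y z, A x y z → a * x + b * y + c * z = 1 →
      0 ≤ a' * x + b' * y + c' * z) → 0 ≤ w₁ * a' + w₂ * b' + w₃ * c' := by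
    intro a' b' c' h
    obtain ⟨ε, h0, H⟩ := tilt a' b' c' h
    by_contra! hlt
    have e : φ (a + ε * a', b + ε * b', c + ε * c') =
        w₁ * a + w₂ * b + w₃ * c + ε * (w₁ * a' + w₂ * b' + w₃ * c') := by simp only [φ]; ring
    have : ε * (w₁ * a' + w₂ * b' + w₃ * c') < 0 := mul_neg_of_pos_of_neg h0 hlt
    have := hmin' _ (H ε h0 le_rfl (by rw [e]; linarith))
    rw [e] at this
    simp only [φ] at this
    linarith
  refine ⟨a, b, c, ha, hb, hc, hF, fun a' b' c' h => ?_, hcone⟩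
  have h0 := hcone a' b' c' fun x y z hA h1 => (h x y z hA h1).ge
  have h0' := hcone (-a') (-b') (-c') fun x y z hA h1 => by have := h x y z hA h1; linarith
  have hw : w₁ * a' + w₂ * b' + w₃ * c' = 0 := by linarith
  obtain ⟨ε₁, he1, H1⟩ := tilt a' b' c' fun x y z hA h1 => (h x y z hA h1).ge
  obtain ⟨ε₂, he2, H2⟩ := tilt (-a') (-b') (-c') fun x y z hA h1 => by
    have := h x y z hA h1; linarith
  set ε := min ε₁ ε₂ with hε
  have hεp : 0 < ε := lt_min he1 he2
  have e1 : φ (a + ε * a', b + ε * b', c + ε * c') = φ (a, b, c) := by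
    simp only [φ]; linear_combination ε * hw
  have e2 : φ (a + ε * -a', b + ε * -b', c + ε * -c') = φ (a, b, c) := by
    simp only [φ]; linear_combination -ε * hw
  have m1 := H1 ε hεp (min_le_left _ _) (e1.trans_le hC)
  have m2 := H2 ε hεp (min_le_right _ _) (e2.trans_le hC)
  have := hext _ ⟨m1, e1.trans_le hle⟩ _ ⟨m2, e2.trans_le hle⟩
    ⟨1 / 2, 1 / 2, by norm_num, by norm_num, by norm_num, by
      ext <;> simp <;> ring⟩
  have := this.1
  simp only [Prod.mk.injEq] at this
  obtain ⟨t1, t2, t3⟩ := this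
  refine ⟨?_, ?_, ?_⟩
  · have : ε * a' = 0 := by linarith
    exact (mul_eq_zero.1 this).resolve_left hεp.ne'
  · have : ε * b' = 0 := by linarith
    exact (mul_eq_zero.1 this).resolve_left hεp.ne'
  · have : ε * c' = 0 := by linarith
    exact (mul_eq_zero.1 this).resolve_left hεp.ne'

/-- Order at least `3` is impossible: an optimal weight for `(1, 1, 1)` has an exceptional face with
apex `p eᵢ + eⱼ`, `p ≥ 2`, and `eᵢ - p eⱼ` is nonnegative on it although `1 - p < 0`. -/
lemma NHyp.not_order_three {A : ℕ → ℕ → ℕ → Prop} (h : NHyp A)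
    (h3 : ∀ x y z, A x y z → 3 ≤ x + y + z) : False := by
  obtain ⟨a, b, c, ha, hb, hc, hF, hR, hw⟩ := exists_vertex A (w₁ := 1) (w₂ := 1) (w₃ := 1) (C := 1)
    one_pos one_pos one_pos
    ⟨1 / 3, 1 / 3, 1 / 3, by norm_num, by norm_num, by norm_num, fun x y z hA => by
      have : ((3 : ℕ) : ℝ) ≤ ((x + y + z : ℕ) : ℝ) := by exact_mod_cast h3 x y z hA
      push_cast at this; linarith, by norm_num⟩
    (fun a b c ha hb hc hF h0 => by
      obtain ⟨x₁, y₁, z₁, hA₁, s₁⟩ := h.nx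
      obtain ⟨x₂, y₂, z₂, hA₂, s₂⟩ := h.ny
      obtain ⟨x₃, y₃, z₃, hA₃, s₃⟩ := h.nz
      obtain ⟨y₄, z₄, hA₄⟩ := h.px
      obtain ⟨x₅, z₅, hA₅⟩ := h.py
      obtain ⟨x₆, y₆, hA₆⟩ := h.pz
      have f₁ := hF _ _ _ hA₁
      have f₂ := hF _ _ _ hA₂
      have f₃ := hF _ _ _ hA₃
      have f₄ := hF _ _ _ hA₄
      have f₅ := hF _ _ _ hA₅
      have f₆ := hF _ _ _ hA₆
      have c₁ : (y₁ = 0 ∧ z₁ = 0) ∨ (y₁ = 1 ∧ z₁ = 0) ∨ (y₁ = 0 ∧ z₁ = 1) := by omega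
      have c₂ : (z₂ = 0 ∧ x₂ = 0) ∨ (z₂ = 1 ∧ x₂ = 0) ∨ (z₂ = 0 ∧ x₂ = 1) := by omega
      have c₃ : (x₃ = 0 ∧ y₃ = 0) ∨ (x₃ = 1 ∧ y₃ = 0) ∨ (x₃ = 0 ∧ y₃ = 1) := by omega
      by_contra! hle
      rcases h0 with rfl | rfl | rfl
      · rcases c₁ with ⟨rfl, rfl⟩ | ⟨rfl, rfl⟩ | ⟨rfl, rfl⟩ <;> norm_num at f₁
        · have : c = 0 := by linarith
          subst this; norm_num at f₅
        · have : b = 0 := by linarith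
          subst this; norm_num at f₆
      · rcases c₂ with ⟨rfl, rfl⟩ | ⟨rfl, rfl⟩ | ⟨rfl, rfl⟩ <;> norm_num at f₂
        · have : a = 0 := by linarith
          subst this; norm_num at f₆
        · have : c = 0 := by linarith
          subst this; norm_num at f₄
      · rcases c₃ with ⟨rfl, rfl⟩ | ⟨rfl, rfl⟩ | ⟨rfl, rfl⟩ <;> norm_num at f₃
        · have : b = 0 := by linarith
          subst this; norm_num at f₄
        · have : a = 0 := by linarith
          subst this; norm_num at f₅)
  obtain ⟨p, -, H⟩ := h.exc a b c ha hb hc hF hR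
  have hp : 2 ≤ p := by
    rcases H with H | H | H | H | H | H <;> · have := h3 _ _ _ H.1.1; omega
  have hp' : (2 : ℝ) ≤ p := by exact_mod_cast hp
  rcases H with ⟨-, H⟩ | ⟨-, H⟩ | ⟨-, H⟩ | ⟨-, H⟩ | ⟨-, H⟩ | ⟨-, H⟩
  · have := hw 1 (-p) 0 fun x y z hA h1 => by
      rcases H x y z ⟨hA, h1⟩ with rfl | ⟨rfl, rfl, rfl⟩ <;> simp
    linarith
  · have := hw 1 0 (-p) fun x y z hA h1 => by
      rcases H x y z ⟨hA, h1⟩ with rfl | ⟨rfl, rfl, rfl⟩ <;> simp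
    linarith
  · have := hw (-p) 1 0 fun x y z hA h1 => by
      rcases H x y z ⟨hA, h1⟩ with rfl | ⟨rfl, rfl, rfl⟩ <;> simp
    linarith
  · have := hw 0 1 (-p) fun x y z hA h1 => by
      rcases H x y z ⟨hA, h1⟩ with rfl | ⟨rfl, rfl, rfl⟩ <;> simp
    linarith
  · have := hw (-p) 0 1 fun x y z hA h1 => by
      rcases H x y z ⟨hA, h1⟩ with rfl | ⟨rfl, rfl, rfl⟩ <;> simp
    linarith
  · have := hw 0 (-p) 1 fun x y z hA h1 => by
      rcases H x y z ⟨hA, h1⟩ with rfl | ⟨rfl, rfl, rfl⟩ <;> simp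
    linarith

/-- `x²` cannot be the only quadratic monomial: the same duality argument, now with an optimal
weight for `(2, 1, 1)`. -/
lemma NHyp.not_one_square {A : ℕ → ℕ → ℕ → Prop} (h : NHyp A) (hxx : A 2 0 0)
    (h3 : ∀ x y z, A x y z → (x = 2 ∧ y = 0 ∧ z = 0) ∨ 3 ≤ x + y + z) : False := by
  obtain ⟨a, b, c, ha, hb, hc, hF, hR, hw⟩ := exists_vertex A (w₁ := 2) (w₂ := 1) (w₃ := 1)
    (C := 5 / 3) two_pos one_pos one_pos
    ⟨1 / 2, 1 / 3, 1 / 3, by norm_num, by norm_num, by norm_num, fun x y z hA => by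
      rcases h3 x y z hA with ⟨rfl, rfl, rfl⟩ | h3
      · norm_num
      · have : ((3 : ℕ) : ℝ) ≤ ((x + y + z : ℕ) : ℝ) := by exact_mod_cast h3
        have hx : (0 : ℝ) ≤ x := Nat.cast_nonneg x
        push_cast at this; linarith, by norm_num⟩
    (fun a b c ha hb hc hF h0 => by
      obtain ⟨x₂, y₂, z₂, hA₂, s₂⟩ := h.ny
      obtain ⟨x₃, y₃, z₃, hA₃, s₃⟩ := h.nz
      have f₀ := hF _ _ _ hxx
      have f₂ := hF _ _ _ hA₂
      have f₃ := hF _ _ _ hA₃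
      have c₂ : (z₂ = 0 ∧ x₂ = 0) ∨ (z₂ = 1 ∧ x₂ = 0) ∨ (z₂ = 0 ∧ x₂ = 1) := by omega
      have c₃ : (x₃ = 0 ∧ y₃ = 0) ∨ (x₃ = 1 ∧ y₃ = 0) ∨ (x₃ = 0 ∧ y₃ = 1) := by omega
      norm_num at f₀
      rcases h0 with rfl | rfl | rfl
      · linarith
      · rcases c₂ with ⟨rfl, rfl⟩ | ⟨rfl, rfl⟩ | ⟨rfl, rfl⟩ <;> norm_num at f₂ <;> linarith
      · rcases c₃ with ⟨rfl, rfl⟩ | ⟨rfl, rfl⟩ | ⟨rfl, rfl⟩ <;> norm_num at f₃ <;> linarith)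
  have f₀ := hF _ _ _ hxx
  norm_num at f₀
  obtain ⟨p, hp1, H⟩ := h.exc a b c ha hb hc hF hR
  have hp1' : (1 : ℝ) ≤ p := by exact_mod_cast hp1
  -- away from the axis of the square, the apex has `p ≥ 2`
  have hp : ∀ x y z, A x y z → x + y + z ≤ p + 1 → x ≠ 2 ∨ y ≠ 0 → (2 : ℝ) ≤ p := by
    intro x y z hA hs hne
    have := h3 x y z hA
    have : 2 ≤ p := by omega
    exact_mod_cast this
  rcases H with ⟨H1, H⟩ | ⟨H1, H⟩ | ⟨-, H⟩ | ⟨H1, H⟩ | ⟨-, H⟩ | ⟨H1, H⟩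
  · have := hp _ _ _ H1.1 le_rfl (by omega)
    have e := H1.2
    norm_num at e
    nlinarith
  · have := h3 _ _ _ H1.1
    have : 2 ≤ p := by omega
    have : (2 : ℝ) ≤ p := by exact_mod_cast this
    have e := H1.2
    norm_num at e
    nlinarith
  · have := hw (-p) 1 0 fun x y z hA h1 => by
      rcases H x y z ⟨hA, h1⟩ with rfl | ⟨rfl, rfl, rfl⟩ <;> simp
    linarith
  · have := hp _ _ _ H1.1 (by omega) (by omega)
    have := hw 0 1 (-p) fun x y z hA h1 => by
      rcases H x y z ⟨hA, h1⟩ with rfl | ⟨rfl, rfl, rfl⟩ <;> simp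
    linarith
  · have := hw (-p) 0 1 fun x y z hA h1 => by
      rcases H x y z ⟨hA, h1⟩ with rfl | ⟨rfl, rfl, rfl⟩ <;> simp
    linarith
  · have := hp _ _ _ H1.1 (by omega) (by omega)
    have := hw 0 (-p) 1 fun x y z hA h1 => by
      rcases H x y z ⟨hA, h1⟩ with rfl | ⟨rfl, rfl, rfl⟩ <;> simp
    linarith

/-- A support whose compact 2-faces are all exceptional has an edge of the family `𝒥`. -/
lemma NHyp.someEdge {A : ℕ → ℕ → ℕ → Prop} (h : NHyp A) : SomeEdge A := by
  by_cases hxy : A 1 1 0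
  · exact h.edge_of_mixed hxy
  by_cases hyz : A 0 1 1
  · exact SomeEdge.of_rot (h.rot.rot.edge_of_mixed (A := fun x y z => A z x y) hyz).of_rot
  by_cases hxz : A 1 0 1
  · exact SomeEdge.of_rot (h.rot.edge_of_mixed (A := fun x y z => A y z x) hxz)
  exfalso
  have c : ∀ x y z, A x y z → (x = 2 ∧ y = 0 ∧ z = 0 ∧ A 2 0 0) ∨ (x = 0 ∧ y = 2 ∧ z = 0 ∧ A 0 2 0) ∨
      (x = 0 ∧ y = 0 ∧ z = 2 ∧ A 0 0 2) ∨ 3 ≤ x + y + z := by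
    intro x y z hA
    have := h.ord x y z hA
    have : (x = 2 ∧ y = 0 ∧ z = 0) ∨ (x = 0 ∧ y = 2 ∧ z = 0) ∨ (x = 0 ∧ y = 0 ∧ z = 2) ∨
        (x = 1 ∧ y = 1 ∧ z = 0) ∨ (x = 0 ∧ y = 1 ∧ z = 1) ∨ (x = 1 ∧ y = 0 ∧ z = 1) ∨
        3 ≤ x + y + z := by omega
    rcases this with ⟨rfl, rfl, rfl⟩ | ⟨rfl, rfl, rfl⟩ | ⟨rfl, rfl, rfl⟩ | ⟨rfl, rfl, rfl⟩ |
      ⟨rfl, rfl, rfl⟩ | ⟨rfl, rfl, rfl⟩ | h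
    · exact Or.inl ⟨rfl, rfl, rfl, hA⟩
    · exact Or.inr (Or.inl ⟨rfl, rfl, rfl, hA⟩)
    · exact Or.inr (Or.inr (Or.inl ⟨rfl, rfl, rfl, hA⟩))
    · exact absurd hA hxy
    · exact absurd hA hyz
    · exact absurd hA hxz
    · exact Or.inr (Or.inr (Or.inr h))
  by_cases hxx : A 2 0 0 <;> by_cases hyy : A 0 2 0 <;> by_cases hzz : A 0 0 2
  · exact h.no_two_squares hxx hyy hxz hyz
  · exact h.no_two_squares hxx hyy hxz hyz
  · exact h.rot.no_two_squares (A := fun x y z => A y z x) hzz hxx hyz hxy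
  · exact h.not_one_square hxx fun x y z hA => by have := c x y z hA; tauto
  · exact h.rot.rot.no_two_squares (A := fun x y z => A z x y) hyy hzz hxy hxz
  · exact h.swap.not_one_square (A := fun x y z => A y x z) hyy fun x y z hA => by
      have := c y x z hA
      have : (y = 0 ∧ x = 2 ∧ z = 0) ∨ 3 ≤ y + x + z := by tauto
      omega
  · exact h.rot.not_one_square (A := fun x y z => A y z x) hzz fun x y z hA => by
      have := c y z x hA
      have : (y = 0 ∧ z = 0 ∧ x = 2) ∨ 3 ≤ y + z + x := by tauto
      omega
  · exact h.not_order_three fun x y z hA => by have := c x y z hA; tauto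

/-! ### Partial derivatives and Taylor coefficients of analytic germs -/

lemma analyticAt_pder {n : ℕ} {g : (Fin n → ℂ) → ℂ} {z : Fin n → ℂ} (hg : AnalyticAt ℂ g z)
    (i : Fin n) : AnalyticAt ℂ (pder i g) z :=
  ((ContinuousLinearMap.apply ℂ ℂ (Pi.single i 1 : Fin n → ℂ)).analyticAt _).comp hg.fderiv

lemma pder_congr {n : ℕ} {g h : (Fin n → ℂ) → ℂ} {z : Fin n → ℂ} (H : g =ᶠ[𝓝 z] h)
    (i : Fin n) : pder i g =ᶠ[𝓝 z] pder i h :=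
  (H.fderiv (𝕜 := ℂ)).mono fun w hw => by simp only [pder, hw]

lemma pder_comm {n : ℕ} {g : (Fin n → ℂ) → ℂ} {z : Fin n → ℂ} (hg : AnalyticAt ℂ g z)
    (i j : Fin n) : pder i (pder j g) =ᶠ[𝓝 z] pder j (pder i g) := by
  filter_upwards [hg.eventually_analyticAt] with w hw
  have hd : DifferentiableAt ℂ (fderiv ℂ g) w := hw.fderiv.differentiableAt
  have key : ∀ a b : Fin n, pder a (pder b g) w =
      fderiv ℂ (fderiv ℂ g) w (Pi.single a 1) (Pi.single b 1) := by
    intro a b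
    have := ((ContinuousLinearMap.apply ℂ ℂ (Pi.single b 1 : Fin n → ℂ)).hasFDerivAt.comp w
      hd.hasFDerivAt).fderiv
    change fderiv ℂ (⇑(ContinuousLinearMap.apply ℂ ℂ (Pi.single b 1 : Fin n → ℂ)) ∘ fderiv ℂ g) w
      (Pi.single a 1) = _
    rw [this]; rfl
  rw [key, key]
  exact hw.contDiffAt.isSymmSndFDerivAt_of_omega _ _

lemma analyticAt_iter {n : ℕ} {g : (Fin n → ℂ) → ℂ} {z : Fin n → ℂ} (hg : AnalyticAt ℂ g z)
    (i : Fin n) (m : ℕ) : AnalyticAt ℂ ((pder i)^[m] g) z := by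
  induction m with
  | zero => exact hg
  | succ m ih => rw [Function.iterate_succ_apply']; exact analyticAt_pder ih i

lemma iter_congr {n : ℕ} {g h : (Fin n → ℂ) → ℂ} {z : Fin n → ℂ} (H : g =ᶠ[𝓝 z] h)
    (i : Fin n) (m : ℕ) : (pder i)^[m] g =ᶠ[𝓝 z] (pder i)^[m] h := by
  induction m with
  | zero => exact H
  | succ m ih => rw [Function.iterate_succ_apply', Function.iterate_succ_apply']; exact pder_congr ih i

lemma iter_pder_comm {n : ℕ} {g : (Fin n → ℂ) → ℂ} {z : Fin n → ℂ} (hg : AnalyticAt ℂ g z)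
    (i j : Fin n) (m : ℕ) : (pder i)^[m] (pder j g) =ᶠ[𝓝 z] pder j ((pder i)^[m] g) := by
  induction m with
  | zero => rfl
  | succ m ih =>
    rw [Function.iterate_succ_apply', Function.iterate_succ_apply']
    exact (pder_congr ih i).trans (pder_comm (analyticAt_iter hg i m) i j)

lemma mder_three (ν : Fin 3 → ℕ) (g : (Fin 3 → ℂ) → ℂ) :
    mder ν g = (pder 0)^[ν 0] ((pder 1)^[ν 1] ((pder 2)^[ν 2] g)) := by
  simp [mder, List.finRange]

lemma mder_pder {g : (Fin 3 → ℂ) → ℂ} (hg : AnalyticAt ℂ g 0) (ν : Fin 3 → ℕ) (i : Fin 3) :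
    mder ν (pder i g) 0 = mder (ν + Pi.single i 1) g 0 := by
  rw [mder_three, mder_three]
  have a2 := analyticAt_iter hg 2 (ν 2)
  have a1 := analyticAt_iter a2 1 (ν 1)
  suffices H : (pder 0)^[ν 0] ((pder 1)^[ν 1] ((pder 2)^[ν 2] (pder i g))) =ᶠ[𝓝 0]
      (pder 0)^[(ν + Pi.single i 1 : Fin 3 → ℕ) 0] ((pder 1)^[(ν + Pi.single i 1 : Fin 3 → ℕ) 1]
        ((pder 2)^[(ν + Pi.single i 1 : Fin 3 → ℕ) 2] g)) from H.eq_of_nhds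
  fin_cases i
  · simp only [Fin.zero_eta, Pi.add_apply, Pi.single_eq_same, ne_eq, one_ne_zero, not_false_eq_true,
      Pi.single_eq_of_ne, add_zero, Function.iterate_succ_apply, Fin.reduceEq]
    refine iter_congr ?_ 0 _
    exact (iter_congr (iter_pder_comm hg 2 0 _) 1 _).trans (iter_pder_comm a2 1 0 _)
  · simp only [Fin.mk_one, Pi.add_apply, Pi.single_eq_same, ne_eq, zero_ne_one, not_false_eq_true,
      Pi.single_eq_of_ne, add_zero, Function.iterate_succ_apply, Fin.reduceEq]
    exact iter_congr (iter_congr (iter_pder_comm hg 2 1 _) 1 _) 0 _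
  · simp only [Fin.reduceFinMk, Pi.add_apply, Pi.single_eq_same, ne_eq, Fin.reduceEq,
      not_false_eq_true, Pi.single_eq_of_ne, add_zero, Function.iterate_succ_apply]
    rfl

lemma mder_zero' (g : (Fin 3 → ℂ) → ℂ) : mder 0 g = g := by simp [mder_three]

lemma fderiv_eq_sum_pder {n : ℕ} (g : (Fin n → ℂ) → ℂ) (z p : Fin n → ℂ) :
    fderiv ℂ g z p = ∑ i, p i * pder i g z := by
  conv_lhs => rw [pi_eq_sum_univ' p]
  simp [pder]

/-- Anisotropic Taylor estimate: if the coefficients of `g` supported in `J` have `u`-weight at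
least `s`, then `g = O(ρ^s)` on the points `p` of the coordinate subspace `J` with
`|pᵢ| ≤ ρ^{uᵢ}`. -/
lemma weight_bound (J : Fin 3 → Prop) {u : Fin 3 → ℝ} (hu : ∀ i, 0 < u i) {g : (Fin 3 → ℂ) → ℂ}
    (hg : AnalyticAt ℂ g 0) (s : ℝ)
    (hs : ∀ ν : Fin 3 → ℕ, (∀ i, ¬J i → ν i = 0) → mder ν g 0 ≠ 0 → s ≤ ∑ i, u i * ν i) :
    ∃ C : ℝ, 0 ≤ C ∧ ∃ r > (0 : ℝ), ∀ (p : Fin 3 → ℂ) (ρ : ℝ), ‖p‖ < r → 0 ≤ ρ → ρ ≤ 1 →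
      (∀ i, ¬J i → p i = 0) → (∀ i, ‖p i‖ ≤ ρ ^ u i) → ‖g p‖ ≤ C * ρ ^ max s 0 := by
  classical
  obtain ⟨δ, hδ, hδu⟩ : ∃ δ > (0 : ℝ), ∀ i, δ ≤ u i :=
    ⟨min (u 0) (min (u 1) (u 2)), by simp [hu], fun i => by fin_cases i <;> simp⟩
  obtain ⟨n, hn⟩ : ∃ n : ℕ, s ≤ n * δ := by
    obtain ⟨n, hn⟩ := exists_nat_ge (s / δ)
    exact ⟨n, by rwa [div_le_iff₀ hδ] at hn⟩
  -- the case `s ≤ 0` is boundedness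
  have base : ∀ (g : (Fin 3 → ℂ) → ℂ) (s : ℝ), AnalyticAt ℂ g 0 → s ≤ 0 →
      ∃ C : ℝ, 0 ≤ C ∧ ∃ r > (0 : ℝ), ∀ (p : Fin 3 → ℂ) (ρ : ℝ), ‖p‖ < r → 0 ≤ ρ → ρ ≤ 1 →
      (∀ i, ¬J i → p i = 0) → (∀ i, ‖p i‖ ≤ ρ ^ u i) → ‖g p‖ ≤ C * ρ ^ max s 0 := by
    intro g s hg hs
    have : ∀ᶠ z in 𝓝 (0 : Fin 3 → ℂ), ‖g z‖ < ‖g 0‖ + 1 :=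
      hg.continuousAt.norm.eventually (gt_mem_nhds (lt_add_one _))
    obtain ⟨r, hr, H⟩ := Metric.eventually_nhds_iff.1 this
    refine ⟨‖g 0‖ + 1, by positivity, r, hr, fun p ρ hp _ _ _ _ => ?_⟩
    rw [max_eq_right hs, Real.rpow_zero, mul_one]
    exact (H (by simpa using hp)).le
  induction n generalizing g s with
  | zero => exact base g s hg (by simpa using hn)
  | succ n ih =>
    rcases le_or_gt s 0 with h0 | h0
    · exact base g s hg h0
    have hg0 : g 0 = 0 := by
      by_contra hne
      have := hs 0 (fun _ _ => rfl) (by rwa [mder_zero'])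
      simp at this
      linarith
    have hpart : ∀ i, ∃ C : ℝ, 0 ≤ C ∧ ∃ r > (0 : ℝ), ∀ (p : Fin 3 → ℂ) (ρ : ℝ), ‖p‖ < r → 0 ≤ ρ →
        ρ ≤ 1 → (∀ i, ¬J i → p i = 0) → (∀ i, ‖p i‖ ≤ ρ ^ u i) → J i →
        ‖pder i g p‖ ≤ C * ρ ^ max (s - u i) 0 := by
      intro i
      by_cases hi : J i
      · obtain ⟨C, hC, r, hr, H⟩ := ih (analyticAt_pder hg i) (s - u i) (fun ν hν h => by
          rw [mder_pder hg] at h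
          have := hs _ (fun j hj => by
            have : j ≠ i := fun e => hj (e ▸ hi)
            simp [hν j hj, this]) h
          simp only [Pi.add_apply, Nat.cast_add, mul_add, Finset.sum_add_distrib] at this
          have e : ∑ x, u x * ((Pi.single i 1 : Fin 3 → ℕ) x : ℝ) = u i := by
            rw [Finset.sum_eq_single i] <;> simp +contextual
          linarith) (by push_cast at hn; linarith [hδu i])
        exact ⟨C, hC, r, hr, fun p ρ h1 h2 h3 h4 h5 _ => H p ρ h1 h2 h3 h4 h5⟩
      · exact ⟨0, le_rfl, 1, one_pos, fun p ρ h1 h2 h3 h4 h5 h6 => absurd h6 hi⟩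
    choose C hC r hr H using hpart
    obtain ⟨r₀, hr₀, hd⟩ := Metric.eventually_nhds_iff.1 hg.eventually_analyticAt
    refine ⟨∑ i, C i, Finset.sum_nonneg fun i _ => hC i, min r₀ (min (r 0) (min (r 1) (r 2))),
      by simp [hr, hr₀], fun p ρ hp hρ0 hρ1 hJ hpρ => ?_⟩
    simp only [lt_min_iff] at hp
    have hpr : ∀ i, ‖p‖ < r i := fun i => by fin_cases i <;> simp [hp]
    have hder : ∀ t ∈ Set.Icc (0 : ℝ) 1, HasDerivWithinAt (fun t : ℝ => g (t • p))
        (fderiv ℂ g (t • p) p) (Set.Icc 0 1) t := by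
      intro t ht
      have hle : ‖t • p‖ ≤ ‖p‖ := by
        rw [norm_smul, Real.norm_of_nonneg ht.1]
        exact mul_le_of_le_one_left (norm_nonneg _) ht.2
      have h1 : HasFDerivAt g (fderiv ℂ g (t • p)) (t • p) :=
        (hd (by simpa using hle.trans_lt hp.1)).differentiableAt.hasFDerivAt
      have h2 : HasDerivAt (fun t : ℝ => t • p) p t := by simpa using (hasDerivAt_id t).smul_const p
      exact ((h1.restrictScalars ℝ).comp_hasDerivAt t h2).hasDerivWithinAt
    have bound : ∀ t ∈ Set.Ico (0 : ℝ) 1,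
        ‖fderiv ℂ g (t • p) p‖ ≤ (∑ i, C i) * ρ ^ max s 0 := by
      intro t ht
      have hti : ∀ i, ‖(t • p) i‖ ≤ ‖p i‖ := fun i => by
        rw [Pi.smul_apply, norm_smul, Real.norm_of_nonneg ht.1]
        exact mul_le_of_le_one_left (norm_nonneg _) ht.2.le
      have hle : ‖t • p‖ ≤ ‖p‖ := by
        rw [norm_smul, Real.norm_of_nonneg ht.1]
        exact mul_le_of_le_one_left (norm_nonneg _) ht.2.le
      rw [fderiv_eq_sum_pder, Finset.sum_mul]
      refine (norm_sum_le _ _).trans (Finset.sum_le_sum fun i _ => ?_)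
      by_cases hi : J i
      · have h1 := H i (t • p) ρ (hle.trans_lt (hpr i)) hρ0 hρ1
          (fun j hj => by simp [hJ j hj]) (fun j => (hti j).trans (hpρ j)) hi
        rw [norm_mul]
        calc ‖p i‖ * ‖pder i g (t • p)‖ ≤ ρ ^ u i * (C i * ρ ^ max (s - u i) 0) :=
              mul_le_mul (hpρ i) h1 (norm_nonneg _) (Real.rpow_nonneg hρ0 _)
          _ = C i * ρ ^ (u i + max (s - u i) 0) := by
              rw [Real.rpow_add_of_nonneg hρ0 (hu i).le (le_max_right _ _)]; ring
          _ ≤ C i * ρ ^ max s 0 := by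
              refine mul_le_mul_of_nonneg_left ?_ (hC i)
              refine Real.rpow_le_rpow_of_exponent_ge_of_imp hρ0 hρ1 ?_ ?_
              · rw [max_eq_left h0.le]; linarith [le_max_left (s - u i) 0]
              · intro _ h; linarith [hu i, le_max_right (s - u i) 0, h, le_max_left s 0]
      · rw [hJ i hi, zero_mul, norm_zero]
        exact mul_nonneg (hC i) (Real.rpow_nonneg hρ0 _)
    simpa [hg0] using norm_image_sub_le_of_norm_deriv_le_segment_01' hder bound

/-! ### Monomials of an isolated singularity near axes and in coordinate planes -/

/-- An analytic germ of one variable vanishing to every order is zero. -/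
lemma eventually_zero_of_flat {φ : ℂ → ℂ} (hφ : AnalyticAt ℂ φ 0)
    (h : ∀ n : ℕ, ∃ C : ℝ, ∀ᶠ t in 𝓝 (0 : ℂ), ‖φ t‖ ≤ C * ‖t‖ ^ n) : ∀ᶠ t in 𝓝 0, φ t = 0 := by
  by_contra hne
  obtain ⟨n, g, hg, hg0, hgφ⟩ := hφ.exists_eventuallyEq_pow_smul_nonzero_iff.2 hne
  obtain ⟨C, hC⟩ := h (n + 1)
  have h1 : ∀ᶠ t in 𝓝[≠] (0 : ℂ), ‖g t‖ ≤ C * ‖t‖ := by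
    filter_upwards [nhdsWithin_le_nhds hgφ, nhdsWithin_le_nhds hC, self_mem_nhdsWithin]
      with t e1 e2 ht
    rw [e1, sub_zero, norm_smul, norm_pow, pow_succ, mul_comm (‖t‖ ^ n) ‖t‖, ← mul_assoc,
      mul_comm (‖t‖ ^ n)] at e2
    exact le_of_mul_le_mul_right e2 (pow_pos (norm_pos_iff.2 ht) n)
  have h2 : Tendsto (fun t : ℂ => C * ‖t‖) (𝓝[≠] 0) (𝓝 0) := by
    have : Continuous fun t : ℂ => C * ‖t‖ := by fun_prop
    simpa using (this.tendsto 0).mono_left nhdsWithin_le_nhds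
  have h3 : Tendsto (fun t : ℂ => ‖g t‖) (𝓝[≠] 0) (𝓝 ‖g 0‖) :=
    hg.continuousAt.norm.tendsto.mono_left nhdsWithin_le_nhds
  exact hg0 (norm_le_zero_iff.1 (le_of_tendsto_of_tendsto h3 h2 h1))

/-- If no coefficient of `g` is supported in `J`, then `g` vanishes near `0` on the coordinate
subspace `J`. -/
lemma eq_zero_on_subspace (J : Fin 3 → Prop) {g : (Fin 3 → ℂ) → ℂ} (hg : AnalyticAt ℂ g 0)
    (h : ∀ ν : Fin 3 → ℕ, (∀ i, ¬J i → ν i = 0) → mder ν g 0 = 0) :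
    ∃ r > (0 : ℝ), ∀ p : Fin 3 → ℂ, ‖p‖ < r → (∀ i, ¬J i → p i = 0) → g p = 0 := by
  obtain ⟨r, hr, hd⟩ := Metric.eventually_nhds_iff.1 hg.eventually_analyticAt
  refine ⟨r, hr, fun p hp hJ => ?_⟩
  -- restrict to the complex line through `p`
  let φ : ℂ → ℂ := fun t => g (t • p)
  let U : Set ℂ := (fun t : ℂ => t • p) ⁻¹' Metric.ball 0 r
  have hU : Convex ℝ U := by
    intro s hs t ht a b ha hb hab
    have := convex_ball (0 : Fin 3 → ℂ) r hs ht ha hb hab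
    simpa only [U, Set.mem_preimage, add_smul, smul_assoc] using this
  have hφ : AnalyticOnNhd ℂ φ U := fun t ht => by
    have h1 : AnalyticAt ℂ (fun t : ℂ => t • p) t := by fun_prop
    exact (hd (by simpa [U] using ht)).comp h1
  have h0 : (0 : ℂ) ∈ U := by simpa [U] using hr
  have hflat : ∀ᶠ t in 𝓝 0, φ t = 0 := by
    refine eventually_zero_of_flat (hφ 0 h0) fun n => ?_
    obtain ⟨C, hC, r', hr', H⟩ := weight_bound J (u := fun _ => 1) (fun _ => one_pos) hg n
      fun ν hν hne => absurd (h ν hν) hne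
    have hc : Continuous fun t : ℂ => ‖t • p‖ := by fun_prop
    have h1 : ∀ᶠ t in 𝓝 (0 : ℂ), ‖t • p‖ < min r' 1 :=
      hc.continuousAt.eventually (gt_mem_nhds (by simpa using hr'))
    refine ⟨C * ‖p‖ ^ n, h1.mono fun t ht => ?_⟩
    have := H (t • p) ‖t • p‖ (ht.trans_le (min_le_left _ _)) (norm_nonneg _)
      (ht.le.trans (min_le_right _ _)) (fun i hi => by simp [hJ i hi])
      (fun i => by simpa only [Real.rpow_one] using norm_le_pi_norm (t • p) i)
    rw [max_eq_left (Nat.cast_nonneg n), Real.rpow_natCast, norm_smul, mul_pow] at this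
    rw [mul_assoc, mul_comm (‖p‖ ^ n)]
    exact this
  have := hφ.eqOn_zero_of_preconnected_of_eventuallyEq_zero hU.isPreconnected h0 hflat
    (show (1 : ℂ) ∈ U by simpa [U] using hp)
  simpa [φ] using this

/-- A holomorphic function of two variables has no isolated zeros: otherwise the maximum principle
for `s ↦ 1 / h(s, t)` bounds `1 / h(0, t)` as `t → 0`. -/
lemma exists_zero_near {h : ℂ × ℂ → ℂ} (ha : AnalyticAt ℂ h 0) (h0 : h 0 = 0) {r : ℝ}
    (hr : 0 < r) : ∃ p : ℂ × ℂ, p ≠ 0 ∧ ‖p‖ < r ∧ h p = 0 := by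
  by_contra! hne
  obtain ⟨r', hr', hd⟩ := Metric.eventually_nhds_iff.1 ha.eventually_analyticAt
  set R := min r r' / 2 with hR
  have hRp : 0 < R := by have := lt_min hr hr'; positivity
  have hRr : R < r := by have := min_le_left r r'; have := lt_min hr hr'; linarith
  have hRr' : R < r' := by have := min_le_right r r'; have := lt_min hr hr'; linarith
  have han : ∀ p : ℂ × ℂ, ‖p‖ ≤ R → AnalyticAt ℂ h p := fun p hp => hd (by
    simpa using hp.trans_lt hRr')
  have hnz : ∀ p : ℂ × ℂ, ‖p‖ ≤ R → p ≠ 0 → h p ≠ 0 := fun p hp hp0 => hne p hp0 (hp.trans_lt hRr)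
  let T : Set (ℂ × ℂ) := Metric.sphere 0 R ×ˢ Metric.closedBall 0 R
  have hTn : ∀ p ∈ T, ‖p‖ ≤ R ∧ p ≠ 0 := by
    rintro ⟨s, t⟩ ⟨hs, ht⟩
    simp only [mem_sphere_iff_norm, sub_zero, mem_closedBall_iff_norm] at hs ht
    refine ⟨by simp [Prod.norm_def, hs, ht], fun e => ?_⟩
    rw [Prod.mk_eq_zero] at e
    rw [e.1, norm_zero] at hs
    exact hRp.ne hs
  have hTc : IsCompact T := (isCompact_sphere _ _).prod (isCompact_closedBall _ _)
  obtain ⟨M, hM⟩ := hTc.exists_bound_of_continuousOn (f := fun p => (h p)⁻¹) fun p hp =>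
    ((han p (hTn p hp).1).continuousAt.inv₀ (hnz p (hTn p hp).1 (hTn p hp).2)).continuousWithinAt
  have key : ∀ t : ℂ, t ≠ 0 → ‖t‖ ≤ R → ‖(h (0, t))⁻¹‖ ≤ M := by
    intro t ht0 ht
    have hs : ∀ s ∈ Metric.closedBall (0 : ℂ) R, DifferentiableAt ℂ (fun s => (h (s, t))⁻¹) s := by
      intro s hs
      have hst : ‖(s, t)‖ ≤ R := by
        rw [mem_closedBall_iff_norm, sub_zero] at hs
        simp [Prod.norm_def, hs, ht]
      have h1 : DifferentiableAt ℂ (fun s : ℂ => (s, t)) s := by fun_prop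
      exact ((han _ hst).differentiableAt.comp s h1).inv (hnz _ hst (by simp [ht0]))
    have hdc : DiffContOnCl ℂ (fun s => (h (s, t))⁻¹) (Metric.ball 0 R) := by
      refine DifferentiableOn.diffContOnCl fun s hs' => ?_
      rw [closure_ball _ hRp.ne'] at hs'
      exact (hs s hs').differentiableWithinAt
    refine Complex.norm_le_of_forall_mem_frontier_norm_le Metric.isBounded_ball hdc (fun s hs' => ?_)
      (subset_closure (Metric.mem_ball_self hRp))
    rw [frontier_ball _ hRp.ne'] at hs'
    exact hM (s, t) ⟨hs', by simpa using ht⟩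
  have hc : Tendsto (fun t : ℂ => M * ‖h (0, t)‖) (𝓝[≠] 0) (𝓝 0) := by
    have h1 : ContinuousAt (fun t : ℂ => h (0, t)) 0 :=
      ContinuousAt.comp (g := h) (f := fun t : ℂ => ((0 : ℂ), t)) ha.continuousAt (by fun_prop)
    have h2 : ContinuousAt (fun t : ℂ => M * ‖h (0, t)‖) 0 := continuousAt_const.mul h1.norm
    have e : M * ‖h ((0 : ℂ), (0 : ℂ))‖ = 0 := by
      rw [show ((0 : ℂ), (0 : ℂ)) = 0 from rfl, h0, norm_zero, mul_zero]
    have := h2.tendsto.mono_left (nhdsWithin_le_nhds (s := {0}ᶜ))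
    rwa [e] at this
  have h1 : ∀ᶠ t in 𝓝[≠] (0 : ℂ), (1 : ℝ) ≤ M * ‖h (0, t)‖ := by
    filter_upwards [self_mem_nhdsWithin, nhdsWithin_le_nhds (Metric.closedBall_mem_nhds (0 : ℂ) hRp)]
      with t ht0 ht
    have ht' : ‖t‖ ≤ R := by simpa using ht
    have := key t ht0 ht'
    have hp : 0 < ‖h (0, t)‖ := norm_pos_iff.2 (hnz _ (by simpa [Prod.norm_def] using ht')
      (by simpa using ht0))
    rw [norm_inv, inv_le_iff_one_le_mul₀ hp] at this
    exact this
  have := le_of_tendsto_of_tendsto (tendsto_const_nhds (x := (1 : ℝ))) hc h1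
  linarith

lemma IsIsolSing.two_le {f : (Fin 3 → ℂ) → ℂ} (hf : IsIsolSing f) {ν : Fin 3 → ℕ}
    (hν : ν ∈ NSupp f) : 2 ≤ ν 0 + ν 1 + ν 2 := by
  obtain ⟨⟨ha, -, h0, h1⟩, -⟩ := hf
  by_contra! hlt
  have hc : ν = 0 ∨ ∃ i, ν = 0 + Pi.single i 1 := by
    have : (ν 0 = 0 ∧ ν 1 = 0 ∧ ν 2 = 0) ∨ (ν 0 = 1 ∧ ν 1 = 0 ∧ ν 2 = 0) ∨
      (ν 0 = 0 ∧ ν 1 = 1 ∧ ν 2 = 0) ∨ (ν 0 = 0 ∧ ν 1 = 0 ∧ ν 2 = 1) := by omega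
    rcases this with h | h | h | h
    · left; ext i; fin_cases i <;> simp [h]
    · right; refine ⟨0, ?_⟩; ext i; fin_cases i <;> simp [h]
    · right; refine ⟨1, ?_⟩; ext i; fin_cases i <;> simp [h]
    · right; refine ⟨2, ?_⟩; ext i; fin_cases i <;> simp [h]
  rcases hc with rfl | ⟨i, rfl⟩
  · exact hν (by rw [mder_zero']; exact h0)
  · exact hν (by rw [← mder_pder ha, mder_zero']; exact h1 i)

/-- Some monomial of `f` is at distance at most `1` from the `i`-th axis, otherwise `∇f` vanishes
on that axis. -/
lemma IsIsolSing.exists_near_axis {f : (Fin 3 → ℂ) → ℂ} (hf : IsIsolSing f) (i : Fin 3) :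
    ∃ ν ∈ NSupp f, ∑ j ∈ univ.erase i, ν j ≤ 1 := by
  obtain ⟨⟨ha, -, -, -⟩, r, hr, hr'⟩ := hf
  by_contra! hne
  have hz : ∀ j, ∃ r > (0 : ℝ), ∀ p : Fin 3 → ℂ, ‖p‖ < r → (∀ l, ¬l = i → p l = 0) →
      pder j f p = 0 := fun j =>
    eq_zero_on_subspace (fun l => l = i) (analyticAt_pder ha j) fun ν hν => by
      rw [mder_pder ha]
      by_contra h
      have := hne _ h
      have e : ∑ l ∈ univ.erase i, (ν + Pi.single j 1 : Fin 3 → ℕ) l ≤ 1 := by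
        simp only [Pi.add_apply, Finset.sum_add_distrib]
        rw [Finset.sum_eq_zero fun l hl => hν l (Finset.ne_of_mem_erase hl), zero_add]
        calc _ ≤ ∑ l, (Pi.single j 1 : Fin 3 → ℕ) l :=
              Finset.sum_le_sum_of_subset (Finset.erase_subset _ _)
          _ = 1 := by simp
      omega
  choose r₁ h1 h2 using hz
  obtain ⟨ε, hε, hε'⟩ : ∃ ε > (0 : ℝ), ε < r ∧ ∀ j, ε < r₁ j := by
    refine ⟨min r (min (r₁ 0) (min (r₁ 1) (r₁ 2))) / 2, ?_, ?_⟩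
    · have : 0 < min r (min (r₁ 0) (min (r₁ 1) (r₁ 2))) := by simp [hr, h1]
      linarith
    · have : 0 < min r (min (r₁ 0) (min (r₁ 1) (r₁ 2))) := by simp [hr, h1]
      have h3 := half_lt_self this
      simp only [lt_min_iff] at h3
      exact ⟨h3.1, fun j => by fin_cases j <;> simp [h3]⟩
  have hn : ‖(Pi.single i (ε : ℂ) : Fin 3 → ℂ)‖ = ε := by
    rw [Pi.norm_single, Complex.norm_of_nonneg hε.le]
  obtain ⟨j, hj⟩ := hr' (Pi.single i (ε : ℂ)) (by rw [hn]; exact hε'.1)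
    (by rw [ne_eq, Pi.single_eq_zero_iff]; exact_mod_cast hε.ne')
  exact hj (h2 j _ (by rw [hn]; exact hε'.2 j) fun l hl => by simp [hl])

/-- Some monomial of `f` lies in the coordinate plane `xᵢ = 0`, otherwise `∂f/∂xᵢ` is the only
partial derivative not vanishing on that plane, and it has nonisolated zeros there. -/
lemma IsIsolSing.exists_on_plane {f : (Fin 3 → ℂ) → ℂ} (hf : IsIsolSing f) (i : Fin 3) :
    ∃ ν ∈ NSupp f, ν i = 0 := by
  obtain ⟨⟨ha, -, -, h0⟩, r, hr, hr'⟩ := hf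
  by_contra! hne
  have hz : ∀ j, ∃ r > (0 : ℝ), j ≠ i → ∀ p : Fin 3 → ℂ, ‖p‖ < r → p i = 0 → pder j f p = 0 := by
    intro j
    by_cases hj : j = i
    · exact ⟨1, one_pos, fun h => absurd hj h⟩
    obtain ⟨r, hr, H⟩ := eq_zero_on_subspace (fun l => l ≠ i) (analyticAt_pder ha j) fun ν hν => by
      rw [mder_pder ha]
      by_contra h
      refine hne _ h ?_
      simp [hν i (by simp), Ne.symm hj]
    exact ⟨r, hr, fun _ p hp hpi => H p hp fun l hl => by rw [not_not.1 hl]; exact hpi⟩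
  choose r₁ h1 h2 using hz
  have hpos : 0 < min r (min (r₁ 0) (min (r₁ 1) (r₁ 2))) := by simp [hr, h1]
  -- the plane `xᵢ = 0`
  let ψ : ℂ × ℂ → Fin 3 → ℂ := fun p => i.insertNth 0 ![p.1, p.2]
  have hψ : ∀ p, ‖ψ p‖ = ‖p‖ := by
    intro p
    refine le_antisymm ((pi_norm_le_iff_of_nonneg (norm_nonneg _)).2 fun j => ?_) ?_
    · refine Fin.succAboveCases i ?_ (fun l => ?_) j
      · simp [ψ]
      · fin_cases l <;> simp [ψ, Prod.norm_def]
    · rw [Prod.norm_def]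
      refine max_le ?_ ?_
      · simpa [ψ] using norm_le_pi_norm (ψ p) (i.succAbove 0)
      · simpa [ψ] using norm_le_pi_norm (ψ p) (i.succAbove 1)
  have hψ0 : ψ 0 = 0 := norm_eq_zero.1 (by rw [hψ, norm_zero])
  have hψa : AnalyticAt ℂ ψ 0 := by
    rw [analyticAt_pi_iff]
    intro j
    refine Fin.succAboveCases i ?_ (fun l => ?_) j
    · simp only [Fin.insertNth_apply_same]; exact analyticAt_const
    · fin_cases l
      · simpa [ψ] using analyticAt_fst
      · simpa [ψ] using analyticAt_snd
  have hg : AnalyticAt ℂ (fun p => pder i f (ψ p)) 0 :=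
    AnalyticAt.comp (g := pder i f) (f := ψ) (by rw [hψ0]; exact analyticAt_pder ha i) hψa
  obtain ⟨p, hp0, hpn, hp⟩ := exists_zero_near hg (by simp only [hψ0, h0]) hpos
  simp only [lt_min_iff] at hpn
  have hpn' : ∀ j, ‖ψ p‖ < r₁ j := fun j => by rw [hψ]; fin_cases j <;> simp [hpn]
  obtain ⟨j, hj⟩ := hr' (ψ p) (by rw [hψ]; exact hpn.1) fun e => hp0 (by
    rw [← norm_eq_zero, ← hψ, e, norm_zero])
  by_cases hji : j = i
  · subst hji; exact hj hp
  · exact hj (h2 j hji _ (hpn' j) (by simp [ψ]))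

/-! ### The gradient near an edge of the family `𝒥` -/

lemma fin_three_cases {i j l : Fin 3} (hij : i ≠ j) (hil : i ≠ l) (hjl : j ≠ l) (a : Fin 3) :
    a = i ∨ a = j ∨ a = l := by
  omega

lemma pder_sub {n : ℕ} {g h : (Fin n → ℂ) → ℂ} {z : Fin n → ℂ} (hg : AnalyticAt ℂ g z)
    (hh : AnalyticAt ℂ h z) (i : Fin n) : pder i (g - h) =ᶠ[𝓝 z] pder i g - pder i h := by
  filter_upwards [hg.eventually_analyticAt, hh.eventually_analyticAt] with w h1 h2
  simp only [pder, Pi.sub_apply, fderiv_sub h1.differentiableAt h2.differentiableAt,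
    sub_apply]

lemma iter_sub {n : ℕ} {g h : (Fin n → ℂ) → ℂ} {z : Fin n → ℂ} (hg : AnalyticAt ℂ g z)
    (hh : AnalyticAt ℂ h z) (i : Fin n) (m : ℕ) :
    (pder i)^[m] (g - h) =ᶠ[𝓝 z] (pder i)^[m] g - (pder i)^[m] h := by
  induction m with
  | zero => rfl
  | succ m ih =>
    simp only [Function.iterate_succ_apply']
    exact (pder_congr ih i).trans (pder_sub (analyticAt_iter hg i m) (analyticAt_iter hh i m) i)

lemma mder_sub {g h : (Fin 3 → ℂ) → ℂ} (hg : AnalyticAt ℂ g 0) (hh : AnalyticAt ℂ h 0)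
    (ν : Fin 3 → ℕ) : mder ν (g - h) 0 = mder ν g 0 - mder ν h 0 := by
  simp only [mder_three]
  have a2 := iter_sub hg hh 2 (ν 2)
  have a1 := (iter_congr a2 1 (ν 1)).trans
    (iter_sub (analyticAt_iter hg 2 _) (analyticAt_iter hh 2 _) 1 (ν 1))
  have a0 := (iter_congr a1 0 (ν 0)).trans
    (iter_sub (analyticAt_iter (analyticAt_iter hg 2 _) 1 _)
      (analyticAt_iter (analyticAt_iter hh 2 _) 1 _) 0 (ν 0))
  exact a0.eq_of_nhds

/-- The monomial `c xⱼᵐ`. -/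
def monoPow (c : ℂ) (j : Fin 3) (m : ℕ) : (Fin 3 → ℂ) → ℂ := fun p => c * p j ^ m

lemma analyticAt_monoPow (c : ℂ) (j : Fin 3) (m : ℕ) (z : Fin 3 → ℂ) :
    AnalyticAt ℂ (monoPow c j m) z := by
  have : AnalyticAt ℂ (fun p : Fin 3 → ℂ => p j) z :=
    (ContinuousLinearMap.proj (R := ℂ) (φ := fun _ : Fin 3 => ℂ) j).analyticAt z
  exact analyticAt_const.mul (this.pow m)

lemma pder_monoPow (c : ℂ) (i j : Fin 3) (m : ℕ) :
    pder i (monoPow c j m) = monoPow (if i = j then c * m else 0) j (m - 1) := by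
  funext z
  have h1 : HasFDerivAt (fun p : Fin 3 → ℂ => p j)
      (ContinuousLinearMap.proj (R := ℂ) (φ := fun _ : Fin 3 => ℂ) j) z :=
    (ContinuousLinearMap.proj (R := ℂ) (φ := fun _ : Fin 3 => ℂ) j).hasFDerivAt
  have h2 := ((h1.pow m).const_mul c).fderiv
  change fderiv ℂ (fun y : Fin 3 → ℂ => c * y j ^ m) z (Pi.single i 1) = _
  rw [h2]
  rcases eq_or_ne i j with rfl | hij
  · simp [monoPow]; ring
  · simp [monoPow, hij]

lemma mder_monoPow (c : ℂ) (j : Fin 3) (m : ℕ) (ν : Fin 3 → ℕ) :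
    mder ν (monoPow c j m) 0 = if ν = Pi.single j m then c * m.factorial else 0 := by
  obtain ⟨n, hn⟩ : ∃ n, ∑ i, ν i = n := ⟨_, rfl⟩
  induction n generalizing ν c m with
  | zero =>
    have h0 : ν = 0 := by
      funext i
      exact Finset.sum_eq_zero_iff.1 hn i (mem_univ i)
    subst h0
    rw [mder_zero']
    rcases Nat.eq_zero_or_pos m with rfl | hm
    · simp [monoPow]
    · rw [if_neg]
      · simp [monoPow, hm.ne']
      · intro h
        have := congrFun h j
        simp at this
        omega
  | succ n ih =>
    obtain ⟨i, hi⟩ : ∃ i, ν i ≠ 0 := by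
      by_contra! h
      simp [h] at hn
    obtain ⟨ν', rfl⟩ : ∃ ν' : Fin 3 → ℕ, ν = ν' + Pi.single i 1 := by
      refine ⟨Function.update ν i (ν i - 1), funext fun a => ?_⟩
      rcases eq_or_ne a i with rfl | h
      · simp; omega
      · simp [h]
    rw [← mder_pder (analyticAt_monoPow ..), pder_monoPow, ih]
    · rcases eq_or_ne i j with rfl | hij
      · rw [if_pos rfl]
        rcases Nat.eq_zero_or_pos m with rfl | hm
        · rw [if_neg (c := _ + _ = _)]
          · simp
          · intro h
            have := congrFun h i
            simp at this
        · obtain ⟨m, rfl⟩ : ∃ m', m = m' + 1 := ⟨m - 1, by omega⟩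
          have : ν' + Pi.single i 1 = Pi.single i (m + 1) ↔ ν' = Pi.single i m := by
            rw [Pi.single_add]; exact add_left_inj _
          simp only [this, Nat.add_sub_cancel, Nat.factorial_succ]
          split_ifs
          · push_cast; ring
          · rfl
      · rw [if_neg hij, zero_mul, ite_self, if_neg]
        intro h
        have := congrFun h i
        simp [hij] at this
    · simpa [Finset.sum_add_distrib] using hn

/-- Anisotropic Taylor estimate with one distinguished power of a variable. -/
lemma weight_bound_main {u : Fin 3 → ℝ} (hu : ∀ i, 0 < u i) {g : (Fin 3 → ℂ) → ℂ}
    (hg : AnalyticAt ℂ g 0) (b : Fin 3) (m : ℕ) (s : ℝ)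
    (hs : ∀ ν : Fin 3 → ℕ, mder ν g 0 ≠ 0 → ν = Pi.single b m ∨ s ≤ ∑ i, u i * ν i) :
    ∃ C : ℝ, 0 ≤ C ∧ ∃ r > (0 : ℝ), ∀ (p : Fin 3 → ℂ) (ρ : ℝ), ‖p‖ < r → 0 ≤ ρ → ρ ≤ 1 →
      (∀ i, ‖p i‖ ≤ ρ ^ u i) →
      ‖g p - mder (Pi.single b m) g 0 / m.factorial * p b ^ m‖ ≤ C * ρ ^ max s 0 := by
  set c := mder (Pi.single b m) g 0 / m.factorial with hc
  obtain ⟨C, hC, r, hr, H⟩ := weight_bound (fun _ => True) hu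
    (hg.sub (analyticAt_monoPow c b m 0)) s (fun ν _ h => by
      rw [mder_sub hg (analyticAt_monoPow ..), mder_monoPow] at h
      by_cases hν : ν = Pi.single b m
      · refine absurd ?_ h
        rw [if_pos hν, hν, hc, div_mul_cancel₀ _ (by exact_mod_cast m.factorial_ne_zero), sub_self]
      · rw [if_neg hν, sub_zero] at h
        exact (hs ν h).resolve_left hν)
  exact ⟨C, hC, r, hr, fun p ρ h1 h2 h3 h4 => H p ρ h1 h2 h3 (fun i hi => absurd trivial hi) h4⟩

/-- The segment joining `eᵢ + eⱼ` to `k eₗ` is an edge of the Newton diagram of `f`, cut out by the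
weight `u` normalised to be `1` on it. -/
structure EdgeAt (f : (Fin 3 → ℂ) → ℂ) (i j l : Fin 3) (k : ℕ) (u : Fin 3 → ℝ) : Prop where
  hij : i ≠ j
  hil : i ≠ l
  hjl : j ≠ l
  hk : 2 ≤ k
  pos : ∀ a, 0 < u a
  sum : u i + u j = 1
  mul : u l * k = 1
  mem₁ : Pi.single i 1 + Pi.single j 1 ∈ NSupp f
  mem₂ : Pi.single l k ∈ NSupp f
  rest : ∀ ν ∈ NSupp f, ν = Pi.single i 1 + Pi.single j 1 ∨ ν = Pi.single l k ∨
    1 < ∑ a, u a * ν a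

lemma EdgeAt.swap {f : (Fin 3 → ℂ) → ℂ} {i j l : Fin 3} {k : ℕ} {u : Fin 3 → ℝ}
    (h : EdgeAt f i j l k u) : EdgeAt f j i l k u :=
  ⟨h.hij.symm, h.hjl, h.hil, h.hk, h.pos, by rw [add_comm, h.sum], h.mul,
    by rw [add_comm]; exact h.mem₁, h.mem₂, fun ν hν => by
      rw [add_comm (Pi.single j 1)]; exact h.rest ν hν⟩

lemma EdgeAt.gap {f : (Fin 3 → ℂ) → ℂ} {i j l : Fin 3} {k : ℕ} {u : Fin 3 → ℝ}
    (h : EdgeAt f i j l k u) : ∃ η > (0 : ℝ), ∀ ν ∈ NSupp f,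
      ν = Pi.single i 1 + Pi.single j 1 ∨ ν = Pi.single l k ∨ 1 + η ≤ ∑ a, u a * ν a := by
  obtain ⟨η, hη, H⟩ := weight_gap (fun x y z => ![x, y, z] ∈ NSupp f) (h.pos 0) (h.pos 1)
    (h.pos 2) 1
  refine ⟨η, hη, fun ν hν => ?_⟩
  have e : ![ν 0, ν 1, ν 2] = ν := by ext a; fin_cases a <;> rfl
  have := H (ν 0) (ν 1) (ν 2) (by rw [e]; exact hν)
  rw [Fin.sum_univ_three]
  have h2 := h.rest ν hν
  rw [Fin.sum_univ_three] at h2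
  tauto

/-- If `xₐ x_b^m` is the only monomial of weight less than `1 + η` involving `xₐ`, then `∂ₐ f` is its
initial part `c x_b^m` up to terms of higher weight. -/
lemma pder_estimate {f : (Fin 3 → ℂ) → ℂ} (hf : AnalyticAt ℂ f 0) {u : Fin 3 → ℝ}
    (hu : ∀ a, 0 < u a) {η : ℝ} (a b : Fin 3) (m : ℕ) (hs : 0 ≤ 1 - u a + η)
    (hmem : Pi.single b m + Pi.single a 1 ∈ NSupp f)
    (H : ∀ ν ∈ NSupp f, ν = Pi.single b m + Pi.single a 1 ∨ ν a = 0 ∨ 1 + η ≤ ∑ i, u i * ν i) :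
    ∃ c : ℂ, c ≠ 0 ∧ ∃ C : ℝ, 0 ≤ C ∧ ∃ r > (0 : ℝ), ∀ (p : Fin 3 → ℂ) (ρ : ℝ), ‖p‖ < r →
      0 ≤ ρ → ρ ≤ 1 → (∀ i, ‖p i‖ ≤ ρ ^ u i) →
      ‖pder a f p - c * p b ^ m‖ ≤ C * ρ ^ (1 - u a + η) := by
  obtain ⟨C, hC, r, hr, h⟩ := weight_bound_main hu (analyticAt_pder hf a) b m (1 - u a + η)
    (fun ν hν => by
      rw [mder_pder hf] at hν
      rcases H _ hν with h | h | h
      · exact Or.inl (add_right_cancel h)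
      · simp at h
      · right
        simp only [Pi.add_apply, Nat.cast_add, mul_add, Finset.sum_add_distrib] at h
        have e : ∑ x, u x * ((Pi.single a 1 : Fin 3 → ℕ) x : ℝ) = u a := by
          rw [Finset.sum_eq_single a] <;> simp +contextual
        linarith)
  rw [max_eq_left hs] at h
  refine ⟨_, ?_, C, hC, r, hr, h⟩
  rw [mder_pder hf]
  exact div_ne_zero hmem (by exact_mod_cast m.factorial_ne_zero)

/-- On the curve `∂ᵢ f = ∂ⱼ f = 0` the remaining derivative has the size `|xₗ|^(k-1)`. -/
lemma EdgeAt.curve {f : (Fin 3 → ℂ) → ℂ} {i j l : Fin 3} {k : ℕ} {u : Fin 3 → ℝ}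
    (h : EdgeAt f i j l k u) (hf : AnalyticAt ℂ f 0) :
    ∃ C₁ > (0 : ℝ), ∃ C₂ : ℝ, ∀ᶠ p in 𝓝 (0 : Fin 3 → ℂ), pder i f p = 0 → pder j f p = 0 →
      C₁ * ‖p l‖ ^ (k - 1) ≤ ‖pder l f p‖ ∧ ‖pder l f p‖ ≤ C₂ * ‖p l‖ ^ (k - 1) := by
  obtain ⟨η, hη, hg⟩ := h.gap
  have hij := h.hij
  have hil := h.hil
  have hjl := h.hjl
  have hui : u i < 1 := by linarith [h.sum, h.pos j]
  have huj : u j < 1 := by linarith [h.sum, h.pos i]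
  have hk2 : (2 : ℝ) ≤ k := by exact_mod_cast h.hk
  have hul : u l < 1 := by nlinarith [h.mul, h.pos l]
  have hcast : ((k - 1 : ℕ) : ℝ) = k - 1 := by
    rw [Nat.cast_sub (by linarith [h.hk]), Nat.cast_one]
  obtain ⟨ci, hci, Ci, hCi, ri, hri, Hi⟩ := pder_estimate hf h.pos (η := η) i j 1 (by linarith)
    (by rw [add_comm]; exact h.mem₁) (fun ν hν => by
      rw [add_comm (Pi.single j 1)]
      rcases hg ν hν with e | e | e
      · exact Or.inl e
      · right; left; simp [e, hil]
      · exact Or.inr (Or.inr e))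
  obtain ⟨cj, hcj, Cj, hCj, rj, hrj, Hj⟩ := pder_estimate hf h.pos (η := η) j i 1 (by linarith)
    h.mem₁ (fun ν hν => by
      rcases hg ν hν with e | e | e
      · exact Or.inl e
      · right; left; simp [e, hjl]
      · exact Or.inr (Or.inr e))
  have ek : (Pi.single l (k - 1) + Pi.single l 1 : Fin 3 → ℕ) = Pi.single l k := by
    rw [← Pi.single_add, Nat.sub_add_cancel (by linarith [h.hk])]
  obtain ⟨cl, hcl, Cl, hCl, rl, hrl, Hl⟩ := pder_estimate hf h.pos (η := η) l l (k - 1)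
    (by linarith) (by rw [ek]; exact h.mem₂) (fun ν hν => by
      rw [ek]
      rcases hg ν hν with e | e | e
      · right; left; simp [e, hil.symm, hjl.symm]
      · exact Or.inl e
      · exact Or.inr (Or.inr e))
  -- the weighted size of a point
  let ρ : (Fin 3 → ℂ) → ℝ := fun p =>
    max (‖p i‖ ^ (u i)⁻¹) (max (‖p j‖ ^ (u j)⁻¹) (‖p l‖ ^ (u l)⁻¹))
  have hcont : Continuous ρ := by
    have : ∀ a, Continuous fun p : Fin 3 → ℂ => ‖p a‖ ^ (u a)⁻¹ := fun a =>
      (continuous_apply a).norm.rpow_const fun _ => Or.inr (inv_nonneg.2 (h.pos a).le)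
    exact (this i).max ((this j).max (this l))
  have h0 : ρ 0 = 0 := by
    simp [ρ, Real.zero_rpow, (h.pos _).ne']
  have hlim : Tendsto ρ (𝓝 0) (𝓝 0) := by simpa [h0] using hcont.tendsto 0
  have hlimη : Tendsto (fun p => ρ p ^ η) (𝓝 0) (𝓝 0) := by
    simpa [Real.zero_rpow hη.ne'] using hlim.rpow_const (Or.inr hη.le)
  have small : ∀ {C c : ℝ}, 0 < c → ∀ᶠ p in 𝓝 (0 : Fin 3 → ℂ), C * ρ p ^ η < c := by
    intro C c hc
    have := hlimη.const_mul C
    rw [mul_zero] at this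
    exact this.eventually (gt_mem_nhds hc)
  have hball : ∀ {r : ℝ}, 0 < r → ∀ᶠ p in 𝓝 (0 : Fin 3 → ℂ), ‖p‖ < r := fun hr =>
    (continuous_norm.tendsto' 0 0 norm_zero).eventually (gt_mem_nhds hr)
  refine ⟨‖cl‖ / 2, by positivity, ‖cl‖ + ‖cl‖ / 2, ?_⟩
  filter_upwards [hball hri, hball hrj, hball hrl, small (C := Ci) (norm_pos_iff.2 hci),
    small (C := Cj) (norm_pos_iff.2 hcj), small (C := Cl) (half_pos (norm_pos_iff.2 hcl)),
    hlim.eventually (gt_mem_nhds one_pos)] with p b1 b2 b3 s1 s2 s3 hρ1 z1 z2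
  have hρ0 : 0 ≤ ρ p := le_max_of_le_left (Real.rpow_nonneg (norm_nonneg _) _)
  have hle : ∀ a, ‖p a‖ ^ (u a)⁻¹ ≤ ρ p := by
    intro a
    rcases fin_three_cases hij hil hjl a with rfl | rfl | rfl <;> simp [ρ]
  have hpa : ∀ a, ‖p a‖ ≤ ρ p ^ u a := by
    intro a
    have := Real.rpow_le_rpow (Real.rpow_nonneg (norm_nonneg _) _) (hle a) (h.pos a).le
    rwa [Real.rpow_inv_rpow (norm_nonneg _) (h.pos a).ne'] at this
  -- a variable whose linear term dominates a vanishing derivative is not of maximal size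
  have strict : ∀ (a b : Fin 3) (c : ℂ) (C : ℝ), u a + u b = 1 → C * ρ p ^ η < ‖c‖ →
      ‖(0 : ℂ) - c * p b ^ 1‖ ≤ C * ρ p ^ (1 - u a + η) → 0 < ρ p → ‖p b‖ ^ (u b)⁻¹ < ρ p := by
    intro a b c C hab hs hb hpos
    have hc : 0 < ‖c‖ := by
      by_contra hc
      have hc0 : c = 0 := by
        rw [← norm_le_zero_iff]; exact not_lt.1 hc
      have : 0 ≤ C * ρ p ^ (1 - u a + η) := (norm_nonneg _).trans hb
      have hC : 0 ≤ C := nonneg_of_mul_nonneg_left this (Real.rpow_pos_of_pos hpos _)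
      have : 0 ≤ C * ρ p ^ η := mul_nonneg hC (Real.rpow_nonneg hρ0 _)
      rw [hc0, norm_zero] at hs
      linarith
    rw [zero_sub, norm_neg, pow_one, norm_mul, Real.rpow_add hpos,
      show 1 - u a = u b by linarith] at hb
    have hub := Real.rpow_pos_of_pos hpos (u b)
    have h1 : ‖p b‖ < ρ p ^ u b := by
      by_contra hcon
      push Not at hcon
      nlinarith
    have := Real.rpow_lt_rpow (norm_nonneg _) h1 (inv_pos.2 (h.pos b))
    rwa [Real.rpow_rpow_inv hρ0 (h.pos b).ne'] at this
  have e1 := Hi p (ρ p) b1 hρ0 hρ1.le hpa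
  have e2 := Hj p (ρ p) b2 hρ0 hρ1.le hpa
  have e3 := Hl p (ρ p) b3 hρ0 hρ1.le hpa
  rw [z1] at e1
  rw [z2] at e2
  have hρl : ρ p = ‖p l‖ ^ (u l)⁻¹ := by
    rcases hρ0.eq_or_lt with hz | hpos
    · exact le_antisymm (hz ▸ Real.rpow_nonneg (norm_nonneg _) _) (hle l)
    · have t1 := strict i j ci Ci h.sum s1 e1 hpos
      have t2 := strict j i cj Cj (by rw [add_comm, h.sum]) s2 e2 hpos
      rcases max_choice (‖p i‖ ^ (u i)⁻¹) (max (‖p j‖ ^ (u j)⁻¹) (‖p l‖ ^ (u l)⁻¹)) with t | t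
      · exact absurd t t2.ne'
      · rcases max_choice (‖p j‖ ^ (u j)⁻¹) (‖p l‖ ^ (u l)⁻¹) with t' | t'
        · exact absurd (t.trans t') t1.ne'
        · exact t.trans t'
  have hpow : ρ p ^ (1 - u l) = ‖p l‖ ^ (k - 1) := by
    rw [hρl, ← Real.rpow_mul (norm_nonneg _), ← Real.rpow_natCast, hcast]
    congr 1
    have := (h.pos l).ne'
    field_simp
    linarith [h.mul]
  rw [Real.rpow_add_of_nonneg hρ0 (by linarith) hη.le, hpow] at e3
  have hn : 0 ≤ ‖p l‖ ^ (k - 1) := by positivity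
  have e4 : ‖pder l f p - cl * p l ^ (k - 1)‖ ≤ ‖cl‖ / 2 * ‖p l‖ ^ (k - 1) := by
    refine e3.trans ?_
    nlinarith
  have e5 : ‖cl * p l ^ (k - 1)‖ = ‖cl‖ * ‖p l‖ ^ (k - 1) := by rw [norm_mul, norm_pow]
  have e6 := norm_sub_norm_le (cl * p l ^ (k - 1)) (pder l f p)
  have e7 := norm_sub_norm_le (pder l f p) (cl * p l ^ (k - 1))
  rw [norm_sub_rev] at e6
  constructor <;> linarith

/-! ### The local coordinates `(∂ᵢ f, ∂ⱼ f, xₗ)` and the exponent -/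

/-- Since `uᵢ + uⱼ = 1`, at most one of `xᵢ²`, `xⱼ²` has weight greater than `1`, hence at most one
of them occurs; this makes the `2 × 2` Hessian in `xᵢ`, `xⱼ` invertible. -/
lemma EdgeAt.hessian {f : (Fin 3 → ℂ) → ℂ} {i j l : Fin 3} {k : ℕ} {u : Fin 3 → ℝ}
    (h : EdgeAt f i j l k u) (hf : AnalyticAt ℂ f 0) :
    pder i (pder j f) 0 ≠ 0 ∧ pder j (pder i f) 0 ≠ 0 ∧
      pder i (pder i f) 0 * pder j (pder j f) 0 = 0 := by
  have key : ∀ a b, pder a (pder b f) 0 = mder (Pi.single a 1 + Pi.single b 1) f 0 := by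
    intro a b
    rw [← mder_pder hf, ← zero_add (Pi.single a 1), ← mder_pder (analyticAt_pder hf b), mder_zero']
  have sq : ∀ {a b}, a ≠ b → a ≠ l → Pi.single i 1 + Pi.single j 1 =
      (Pi.single a 1 + Pi.single b 1 : Fin 3 → ℕ) → pder a (pder a f) 0 ≠ 0 → 1 < 2 * u a := by
    intro a b hab hal e hne
    rw [key] at hne
    rcases h.rest _ hne with t | t | t
    · rw [e] at t
      have := congrFun t a
      simp [hab] at this
    · have := congrFun t a
      simp [hal] at this
    · rw [Finset.sum_eq_single a] at t
      · simp at t; linarith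
      · intro b _ hb; simp [hb]
      · simp
  refine ⟨?_, ?_, ?_⟩
  · rw [key]; exact h.mem₁
  · rw [key, add_comm]; exact h.mem₁
  · by_contra hne
    have t1 := sq h.hij h.hil rfl (left_ne_zero_of_mul hne)
    have t2 := sq h.hij.symm h.hjl (add_comm _ _) (right_ne_zero_of_mul hne)
    linarith [h.sum]

/-- The equations `∂ᵢ f = ∂ⱼ f = 0` define a smooth curve parametrised by `xₗ`: more precisely
`(∂ᵢ f, ∂ⱼ f, xₗ)` is a local coordinate system, here given with a Lipschitz inverse `Ψ`. -/
lemma EdgeAt.chart {f : (Fin 3 → ℂ) → ℂ} {i j l : Fin 3} {k : ℕ} {u : Fin 3 → ℝ}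
    (h : EdgeAt f i j l k u) (hf : AnalyticAt ℂ f 0) (h0 : ∀ a, pder a f 0 = 0) :
    ∃ Ψ : (Fin 3 → ℂ) → (Fin 3 → ℂ), Tendsto Ψ (𝓝 0) (𝓝 0) ∧
      (∀ᶠ y in 𝓝 0, (fun a => if a = l then Ψ y l else pder a f (Ψ y)) = y) ∧
      (∀ᶠ p in 𝓝 0, Ψ (fun a => if a = l then p l else pder a f p) = p) ∧
      ∃ K : ℝ, 0 ≤ K ∧ ∃ s ∈ 𝓝 (0 : Fin 3 → ℂ), ∀ x ∈ s, ∀ y ∈ s, ‖Ψ x - Ψ y‖ ≤ K * ‖x - y‖ := by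
  let Φ : (Fin 3 → ℂ) → (Fin 3 → ℂ) := fun p a => if a = l then p l else pder a f p
  let L : (Fin 3 → ℂ) →L[ℂ] (Fin 3 → ℂ) := ContinuousLinearMap.pi fun a =>
    if a = l then ContinuousLinearMap.proj l else fderiv ℂ (pder a f) 0
  have hΦ0 : Φ 0 = 0 := by
    funext a
    simp [Φ, h0]
  have hΦ : HasStrictFDerivAt Φ L 0 := by
    rw [hasStrictFDerivAt_pi]
    intro a
    by_cases ha : a = l
    · simp only [ha, if_true]
      exact (ContinuousLinearMap.proj (R := ℂ) (φ := fun _ : Fin 3 => ℂ) l).hasStrictFDerivAt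
    · simp only [ha, if_false]
      exact (analyticAt_pder hf a).hasStrictFDerivAt
  have hL : Function.Injective L := by
    rw [injective_iff_map_eq_zero]
    intro v hv
    have hl : v l = 0 := by
      have := congrFun hv l
      simpa [L] using this
    have row : ∀ a, a ≠ l → v i * pder i (pder a f) 0 + v j * pder j (pder a f) 0 = 0 := by
      intro a ha
      have := congrFun hv a
      simp only [L, ContinuousLinearMap.coe_pi', if_neg ha, fderiv_eq_sum_pder,
        Pi.zero_apply] at this
      rw [← this]
      symm
      have hu : (Finset.univ : Finset (Fin 3)) = {i, j, l} := by
        ext a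
        simpa using fin_three_cases h.hij h.hil h.hjl a
      rw [hu, Finset.sum_insert (by simp [h.hij, h.hil]), Finset.sum_insert (by simp [h.hjl]),
        Finset.sum_singleton, hl]
      ring
    have ri := row i h.hil
    have rj := row j h.hjl
    obtain ⟨n1, n2, n3⟩ := h.hessian hf
    have hij : v i = 0 ∧ v j = 0 := by
      rcases mul_eq_zero.1 n3 with e | e
      · rw [e, mul_zero, zero_add] at ri
        have hj := (mul_eq_zero.1 ri).resolve_right n2
        rw [hj, zero_mul, add_zero] at rj
        exact ⟨(mul_eq_zero.1 rj).resolve_right n1, hj⟩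
      · rw [e, mul_zero, add_zero] at rj
        have hi := (mul_eq_zero.1 rj).resolve_right n1
        rw [hi, zero_mul, zero_add] at ri
        exact ⟨hi, (mul_eq_zero.1 ri).resolve_right n2⟩
    funext a
    rcases fin_three_cases h.hij h.hil h.hjl a with rfl | rfl | rfl
    exacts [hij.1, hij.2, hl]
  let E : (Fin 3 → ℂ) ≃L[ℂ] (Fin 3 → ℂ) :=
    (LinearEquiv.ofInjectiveEndo L.toLinearMap hL).toContinuousLinearEquiv
  have hE : HasStrictFDerivAt Φ (E : (Fin 3 → ℂ) →L[ℂ] (Fin 3 → ℂ)) 0 := by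
    have e : (E : (Fin 3 → ℂ) →L[ℂ] (Fin 3 → ℂ)) = L := ContinuousLinearMap.ext fun v => rfl
    rw [e]; exact hΦ
  obtain ⟨K, s, hs, hlip⟩ := hE.to_localInverse.exists_lipschitzOnWith
  have e1 := hE.eventually_right_inverse
  have e3 := hE.localInverse_tendsto
  rw [hΦ0] at hs e1 e3
  refine ⟨hE.localInverse Φ E 0, e3, e1, hE.eventually_left_inverse, K, K.2, s, hs,
    fun x hx y hy => ?_⟩
  simpa [dist_eq_norm] using hlip.dist_le_mul x hx y hy

/-- Along the curve `∂ᵢ f = ∂ⱼ f = 0` the gradient is `∂ₗ f ~ xₗ^(k-1)`, and away from it the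
gradient is bounded below by the distance to the curve; so the exponent is `k - 1`. -/
lemma EdgeAt.loj_eq {f : (Fin 3 → ℂ) → ℂ} {i j l : Fin 3} {k : ℕ} {u : Fin 3 → ℝ}
    (h : EdgeAt f i j l k u) (hf : AnalyticAt ℂ f 0) (h0 : ∀ a, pder a f 0 = 0) :
    loj f = (k : ℝ) - 1 := by
  obtain ⟨Ψ, hΨ, hΦΨ, hΨΦ, K, hK, s, hs, hlip⟩ := h.chart hf h0
  obtain ⟨C₁, hC₁, C₂, hcurve⟩ := h.curve hf
  have hk := h.hk
  have hcast : ((k - 1 : ℕ) : ℝ) = k - 1 := by rw [Nat.cast_sub (by omega), Nat.cast_one]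
  set G : (Fin 3 → ℂ) → ℝ := fun p => ‖(fun a => pder a f p : Fin 3 → ℂ)‖ with hG
  have hGa : ∀ p a, ‖pder a f p‖ ≤ G p := fun p a =>
    norm_le_pi_norm (fun a => pder a f p : Fin 3 → ℂ) a
  have hG0 : ∀ p, 0 ≤ G p := fun p => norm_nonneg _
  have hΨ0 : Ψ 0 = 0 := by
    have := hΨΦ.self_of_nhds
    simpa [h0, ← Pi.zero_def] using this
  -- the point of the curve with prescribed last coordinate
  have hcurve' : ∀ᶠ t in 𝓝 (0 : ℂ), Ψ (Pi.single l t) l = t ∧ pder i f (Ψ (Pi.single l t)) = 0 ∧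
      pder j f (Ψ (Pi.single l t)) = 0 := by
    have ht : Tendsto (fun t : ℂ => (Pi.single l t : Fin 3 → ℂ)) (𝓝 0) (𝓝 0) :=
      (continuous_single (A := fun _ : Fin 3 => ℂ) l).tendsto' 0 0 (Pi.single_zero l)
    filter_upwards [ht.eventually hΦΨ] with t e
    refine ⟨?_, ?_, ?_⟩
    · simpa using congrFun e l
    · simpa [h.hil] using congrFun e i
    · simpa [h.hjl] using congrFun e j
  have hsing : Tendsto (fun t : ℂ => (Pi.single l t : Fin 3 → ℂ)) (𝓝 0) (𝓝 0) :=
    (continuous_single (A := fun _ : Fin 3 => ℂ) l).tendsto' 0 0 (Pi.single_zero l)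
  have hproj : Tendsto (fun p : Fin 3 → ℂ => p l) (𝓝 0) (𝓝 0) :=
    (continuous_apply l).tendsto' 0 0 rfl
  have hGtend : Tendsto G (𝓝 0) (𝓝 0) := by
    have : Tendsto (fun p => (fun a => pder a f p : Fin 3 → ℂ)) (𝓝 0) (𝓝 0) :=
      tendsto_pi_nhds.2 fun a => by
        simpa [h0 a] using (analyticAt_pder hf a).continuousAt.tendsto
    simpa using this.norm
  have hΦt : Tendsto (fun p : Fin 3 → ℂ => fun a => if a = l then p l else pder a f p) (𝓝 0)
      (𝓝 0) := tendsto_pi_nhds.2 fun a => by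
    by_cases ha : a = l
    · simpa [ha] using hproj
    · simpa [ha, h0 a] using (analyticAt_pder hf a).continuousAt.tendsto
  obtain ⟨M, s', hs', hM⟩ := (analyticAt_pder hf l).hasStrictFDerivAt.exists_lipschitzOnWith
  rw [loj]
  refine IsLeast.csInf_eq ⟨⟨?_, ?_⟩, ?_⟩
  · rw [← hcast]; positivity
  · set D : ℝ := K ^ (k - 1) * (2 ^ (k - 1 - 1) * (1 + (1 + M * K) / C₁)) with hD
    have hD0 : 0 ≤ D := by positivity
    have hev : ∀ᶠ p in 𝓝 (0 : Fin 3 → ℂ), ‖p‖ ^ (k - 1) ≤ D * G p := by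
      filter_upwards [hΨΦ, hproj.eventually hcurve', hΦt.eventually_mem hs,
        (hsing.comp hproj).eventually_mem hs, hs', ((hΨ.comp hsing).comp hproj).eventually_mem hs',
        ((hΨ.comp hsing).comp hproj).eventually hcurve,
        hGtend.eventually (gt_mem_nhds one_pos)] with p e1 ⟨e2, e3, e4⟩ m1 m2 m3 m4 hc hG1
      simp only [Function.comp_apply] at m2 m4 hc
      set q := Ψ (Pi.single l (p l)) with hq
      have d1 : ‖p - q‖ ≤ K * G p := by
        have := hlip _ m1 _ m2
        rw [e1] at this
        refine this.trans (mul_le_mul_of_nonneg_left ?_ hK)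
        rw [pi_norm_le_iff_of_nonneg (hG0 p)]
        intro a
        by_cases ha : a = l
        · subst ha; simp [hG0]
        · simpa [ha] using hGa p a
      have d2 : ‖p‖ ≤ K * (G p + ‖p l‖) := by
        have := hlip _ m1 0 (mem_of_mem_nhds hs)
        rw [e1, hΨ0, sub_zero, sub_zero] at this
        refine this.trans (mul_le_mul_of_nonneg_left ?_ hK)
        rw [pi_norm_le_iff_of_nonneg (add_nonneg (hG0 p) (norm_nonneg _))]
        intro a
        by_cases ha : a = l
        · simp [ha, hG0]
        · simpa [ha] using (hGa p a).trans (le_add_of_nonneg_right (norm_nonneg _))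
      have d3 : ‖pder l f q‖ ≤ (1 + M * K) * G p := by
        have := hM.dist_le_mul _ m4 _ m3
        rw [dist_eq_norm, dist_eq_norm, norm_sub_rev q] at this
        have t1 := norm_sub_norm_le (pder l f q) (pder l f p)
        have t2 := hGa p l
        have t3 := mul_le_mul_of_nonneg_left d1 M.2
        calc ‖pder l f q‖ ≤ M * (K * G p) + ‖pder l f p‖ :=
              sub_le_iff_le_add.1 (t1.trans (this.trans t3))
          _ ≤ M * (K * G p) + G p := by gcongr
          _ = (1 + M * K) * G p := by ring
      have d4 := (hc e3 e4).1
      rw [e2] at d4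
      have d5 : ‖p l‖ ^ (k - 1) ≤ (1 + M * K) / C₁ * G p := by
        rw [div_mul_eq_mul_div, le_div_iff₀ hC₁]
        linarith
      have d6 : G p ^ (k - 1) ≤ G p := pow_le_of_le_one (hG0 p) hG1.le (by omega)
      calc ‖p‖ ^ (k - 1) ≤ (K * (G p + ‖p l‖)) ^ (k - 1) := pow_le_pow_left₀ (norm_nonneg _) d2 _
        _ = K ^ (k - 1) * (G p + ‖p l‖) ^ (k - 1) := mul_pow _ _ _
        _ ≤ K ^ (k - 1) * (2 ^ (k - 1 - 1) * (G p ^ (k - 1) + ‖p l‖ ^ (k - 1))) :=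
          mul_le_mul_of_nonneg_left (add_pow_le (hG0 p) (norm_nonneg _) _) (by positivity)
        _ ≤ K ^ (k - 1) * (2 ^ (k - 1 - 1) * (G p + (1 + M * K) / C₁ * G p)) := by gcongr
        _ = D * G p := by rw [hD]; ring
    obtain ⟨r, hr, H⟩ := Metric.eventually_nhds_iff.1 hev
    refine ⟨(D + 1)⁻¹, by positivity, r, hr, fun z hz => ?_⟩
    rw [← hcast, Real.rpow_natCast, inv_mul_le_iff₀ (by positivity)]
    have := H (by simpa using hz)
    have := hG0 z
    change _ ≤ (D + 1) * G z
    linarith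
  · rintro α ⟨hα, C, hC, r, hr, H⟩
    by_contra hlt
    push Not at hlt
    have hev : ∀ᶠ t in 𝓝[>] (0 : ℝ), C ≤ C₂ * t ^ ((k : ℝ) - 1 - α) := by
      have hre : Tendsto (fun t : ℝ => (t : ℂ)) (𝓝[>] 0) (𝓝 0) :=
        (Complex.continuous_ofReal.tendsto' 0 0 Complex.ofReal_zero).mono_left nhdsWithin_le_nhds
      have hball : ∀ᶠ p in 𝓝 (0 : Fin 3 → ℂ), ‖p‖ < r :=
        (continuous_norm.tendsto' 0 0 norm_zero).eventually (gt_mem_nhds hr)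
      filter_upwards [hre.eventually hcurve', ((hΨ.comp hsing).comp hre).eventually hcurve,
        ((hΨ.comp hsing).comp hre).eventually hball, self_mem_nhdsWithin]
        with t ⟨e2, e3, e4⟩ hc hb ht
      simp only [Function.comp_apply] at hc hb
      set q := Ψ (Pi.single l (t : ℂ))
      have ht : (0 : ℝ) < t := ht
      have b1 := (hc e3 e4).2
      have hGq : G q ≤ ‖pder l f q‖ := by
        rw [hG, pi_norm_le_iff_of_nonneg (norm_nonneg _)]
        intro a
        rcases fin_three_cases h.hij h.hil h.hjl a with rfl | rfl | rfl
        · simp [e3]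
        · simp [e4]
        · exact le_rfl
      have hnt : ‖q l‖ = t := by rw [e2, Complex.norm_real, Real.norm_of_nonneg ht.le]
      rw [hnt] at b1
      have b2 : t ^ α ≤ ‖q‖ ^ α :=
        Real.rpow_le_rpow ht.le (hnt ▸ norm_le_pi_norm q l) hα
      have b3 := H q hb
      have b4 : C * t ^ α ≤ C₂ * t ^ (k - 1) := by
        have := mul_le_mul_of_nonneg_left b2 hC.le
        change _ ≤ G q at b3
        linarith
      rw [← Real.rpow_natCast, hcast] at b4
      rw [Real.rpow_sub ht, ← mul_div_assoc, le_div_iff₀ (Real.rpow_pos_of_pos ht _)]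
      exact b4
    have hlim : Tendsto (fun t : ℝ => C₂ * t ^ ((k : ℝ) - 1 - α)) (𝓝[>] 0) (𝓝 0) := by
      have : Tendsto (fun t : ℝ => t ^ ((k : ℝ) - 1 - α)) (𝓝 0) (𝓝 0) := by
        simpa [Real.zero_rpow (sub_pos.2 hlt).ne'] using
          (tendsto_id (x := 𝓝 (0 : ℝ))).rpow_const (p := (k : ℝ) - 1 - α)
            (Or.inr (sub_pos.2 hlt).le)
      simpa using (this.mono_left nhdsWithin_le_nhds).const_mul C₂
    have := ge_of_tendsto hlim hev
    linarith

/-! ### Compact faces as convex hulls of lattice points -/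

/-- A lattice point as a point of `ℝ³`. -/
def latt (ν : Fin 3 → ℕ) : Fin 3 → ℝ := fun i => ν i

/-- The lattice points of the support on which the weight `u` takes the value `t`. -/
def level (f : (Fin 3 → ℂ) → ℂ) (u : Fin 3 → ℝ) (t : ℝ) : Set (Fin 3 → ℕ) :=
  {ν | ν ∈ NSupp f ∧ ∑ i, u i * ν i = t}

/-- The positive weight `u` has minimum `t` on the support of `f`. -/
structure IsMinW (f : (Fin 3 → ℂ) → ℂ) (u : Fin 3 → ℝ) (t : ℝ) : Prop where
  pos : ∀ i, 0 < u i
  le : ∀ ν ∈ NSupp f, t ≤ ∑ i, u i * (ν i : ℝ)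
  att : (level f u t).Nonempty

lemma latt_injective : Function.Injective latt := fun μ ν h => by
  funext i
  have := congrFun h i
  simpa [latt] using this

/-- A convex set may be glued to an open half space along the boundary hyperplane. -/
lemma convex_halfspace_face (u : Fin 3 → ℝ) (t : ℝ) {C : Set (Fin 3 → ℝ)} (hC : Convex ℝ C) :
    Convex ℝ {x : Fin 3 → ℝ | t ≤ ∑ i, u i * x i ∧ (∑ i, u i * x i = t → x ∈ C)} := by
  rintro x ⟨hx, hx'⟩ y ⟨hy, hy'⟩ a b ha hb hab
  have e : ∑ i, u i * (a • x + b • y) i = a * ∑ i, u i * x i + b * ∑ i, u i * y i := by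
    simp only [Fin.sum_univ_three, Pi.add_apply, Pi.smul_apply, smul_eq_mul]; ring
  change t ≤ ∑ i, u i * (a • x + b • y) i ∧ (∑ i, u i * (a • x + b • y) i = t → a • x + b • y ∈ C)
  rw [e]
  set X := ∑ i, u i * x i
  set Y := ∑ i, u i * y i
  obtain rfl : b = 1 - a := by linarith
  refine ⟨by nlinarith, fun h => ?_⟩
  rcases ha.eq_or_lt with rfl | ha'
  · simp only [zero_mul, sub_zero, one_mul, zero_add] at h
    simpa using hy' h
  rcases hb.eq_or_lt with hb' | hb'
  · obtain rfl : a = 1 := by linarith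
    simp only [sub_self, zero_mul, one_mul, add_zero] at h
    simpa using hx' h
  have h1 : X = t := by nlinarith
  have h2 : Y = t := by nlinarith
  exact hC (hx' h1) (hy' h2) ha hb hab

/-- The face of a positive weight is the convex hull of its lattice points. -/
lemma IsMinW.face {f : (Fin 3 → ℂ) → ℂ} {u : Fin 3 → ℝ} {t : ℝ} (h : IsMinW f u t) :
    ell u (NDiag f) = t ∧ faceOf u (NDiag f) = convexHull ℝ (latt '' level f u t) := by
  have hsub : NDiag f ⊆ {x : Fin 3 → ℝ | t ≤ ∑ i, u i * x i ∧
      (∑ i, u i * x i = t → x ∈ convexHull ℝ (latt '' level f u t))} := by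
    refine convexHull_min ?_ (convex_halfspace_face u t (convex_convexHull ℝ _))
    rintro x ⟨ν, hν, hx⟩
    have hle : ∀ i, u i * (ν i : ℝ) ≤ u i * x i := fun i =>
      mul_le_mul_of_nonneg_left (hx i) (h.pos i).le
    have hs : ∑ i, u i * (ν i : ℝ) ≤ ∑ i, u i * x i := Finset.sum_le_sum fun i _ => hle i
    refine ⟨(h.le ν hν).trans hs, fun hxt => subset_convexHull ℝ _ ⟨ν, ⟨hν, ?_⟩, ?_⟩⟩
    · exact le_antisymm (hs.trans hxt.le) (h.le ν hν)
    · have he : ∑ i, u i * (ν i : ℝ) = ∑ i, u i * x i :=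
        le_antisymm hs (hxt.le.trans (h.le ν hν))
      funext i
      exact mul_left_cancel₀ (h.pos i).ne'
        ((Finset.sum_eq_sum_iff_of_le fun i _ => hle i).1 he i (mem_univ i))
  have hlat : ∀ ν ∈ NSupp f, latt ν ∈ NDiag f := fun ν hν =>
    subset_convexHull ℝ _ ⟨ν, hν, fun i => le_refl (ν i : ℝ)⟩
  have hell : ell u (NDiag f) = t := by
    refine IsLeast.csInf_eq ⟨?_, ?_⟩
    · obtain ⟨ν, hν, e⟩ := h.att
      exact ⟨latt ν, hlat ν hν, e⟩
    · rintro _ ⟨x, hx, rfl⟩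
      exact (hsub hx).1
  refine ⟨hell, Set.Subset.antisymm ?_ ?_⟩
  · rintro x ⟨hx, e⟩
    exact (hsub hx).2 (e.trans hell)
  · have hcv : Convex ℝ (faceOf u (NDiag f)) := by
      rintro x ⟨hx, ex⟩ y ⟨hy, ey⟩ a b ha hb hab
      refine ⟨convex_convexHull ℝ _ hx hy ha hb hab, ?_⟩
      have e : ∑ i, u i * (a • x + b • y) i = a * ∑ i, u i * x i + b * ∑ i, u i * y i := by
        simp only [Fin.sum_univ_three, Pi.add_apply, Pi.smul_apply, smul_eq_mul]; ring
      rw [e, ex, ey, ← add_mul, hab, one_mul]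
    refine convexHull_min ?_ hcv
    rintro _ ⟨ν, ⟨hν, e⟩, rfl⟩
    exact ⟨hlat ν hν, e.trans hell.symm⟩

lemma finite_le_weight {u : Fin 3 → ℝ} (hu : ∀ i, 0 < u i) (T : ℝ) :
    {ν : Fin 3 → ℕ | ∑ i, u i * (ν i : ℝ) ≤ T}.Finite := by
  refine (Set.finite_Iic (fun i => ⌈T / u i⌉₊ : Fin 3 → ℕ)).subset fun ν hν i => ?_
  have h1 : u i * (ν i : ℝ) ≤ T := (Finset.single_le_sum (f := fun i => u i * (ν i : ℝ))
    (fun j _ => mul_nonneg (hu j).le (Nat.cast_nonneg _)) (mem_univ i)).trans hν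
  have h2 : (ν i : ℝ) ≤ T / u i := by rw [le_div_iff₀ (hu i)]; linarith
  exact_mod_cast h2.trans (Nat.le_ceil _)

lemma IsMinW.finite {f : (Fin 3 → ℂ) → ℂ} {u : Fin 3 → ℝ} {t : ℝ} (h : IsMinW f u t) :
    (latt '' level f u t).Finite :=
  ((finite_le_weight h.pos t).subset fun _ hν => hν.2.le).image _

lemma exists_isMinW {f : (Fin 3 → ℂ) → ℂ} (hne : (NSupp f).Nonempty) {u : Fin 3 → ℝ}
    (hu : ∀ i, 0 < u i) : ∃ t, IsMinW f u t := by
  obtain ⟨ν₀, h₀⟩ := hne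
  have hfin := (finite_le_weight hu (∑ i, u i * (ν₀ i : ℝ))).inter_of_right (NSupp f)
  obtain ⟨ν, hν, hmin⟩ := Set.exists_min_image _ (fun ν : Fin 3 → ℕ => ∑ i, u i * (ν i : ℝ)) hfin
    ⟨ν₀, h₀, le_refl (∑ i, u i * (ν₀ i : ℝ))⟩
  refine ⟨_, hu, fun μ hμ => ?_, ν, hν.1, rfl⟩
  rcases le_total (∑ i, u i * (μ i : ℝ)) (∑ i, u i * (ν₀ i : ℝ)) with h | h
  · exact hmin μ ⟨hμ, h⟩
  · exact (show _ ≤ _ from hν.2).trans h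

lemma vec_eta {α : Type*} (ν : Fin 3 → α) : ![ν 0, ν 1, ν 2] = ν := by
  ext a; fin_cases a <;> rfl

lemma clm_apply (φ : (Fin 3 → ℝ) →L[ℝ] ℝ) (x : Fin 3 → ℝ) :
    φ x = ∑ i, φ (Pi.single i 1) * x i := by
  conv_lhs => rw [pi_eq_sum_univ' x]
  simp [mul_comm]

/-- The extreme points of a compact face are vertices of the Newton diagram: a separating
functional tilts the weight of the face. -/
lemma IsMinW.vertex {f : (Fin 3 → ℂ) → ℂ} {u : Fin 3 → ℝ} {t : ℝ} (h : IsMinW f u t)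
    {A : Fin 3 → ℝ} (hA : A ∈ (convexHull ℝ (latt '' level f u t)).extremePoints ℝ) :
    IsCompactFace f {A} := by
  obtain ⟨α, hα, rfl⟩ := extremePoints_convexHull_subset hA
  have hnot : latt α ∉ convexHull ℝ ((latt '' level f u t) \ {latt α}) := by
    have hc := ((convex_convexHull ℝ
      (latt '' level f u t)).mem_extremePoints_iff_convex_sdiff.1 hA).2
    intro hmem
    have hsub : convexHull ℝ ((latt '' level f u t) \ {latt α}) ⊆
        convexHull ℝ (latt '' level f u t) \ {latt α} :=
      convexHull_min (fun x hx => ⟨subset_convexHull ℝ _ hx.1, hx.2⟩) hc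
    exact (hsub hmem).2 rfl
  obtain ⟨φ, c, h1, h2⟩ := geometric_hahn_banach_point_closed (convex_convexHull ℝ _)
    ((h.finite.subset Set.sdiff_subset).isClosed_convexHull ℝ) hnot
  have hφ : ∀ ν ∈ level f u t, ν ≠ α → φ (latt α) < φ (latt ν) := fun ν hν hne =>
    h1.trans (h2 _ (subset_convexHull ℝ _ ⟨⟨ν, hν, rfl⟩, fun e => hne (latt_injective e)⟩))
  have hval : ∀ x y z : ℕ, φ (latt ![x, y, z]) = φ (Pi.single 0 1) * x + φ (Pi.single 1 1) * y +
      φ (Pi.single 2 1) * z := by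
    intro x y z
    rw [clm_apply, Fin.sum_univ_three]
    simp [latt]
  have hlev : ∀ x y z : ℕ, ![x, y, z] ∈ NSupp f → u 0 * x + u 1 * y + u 2 * z = t →
      ![x, y, z] ∈ level f u t := fun x y z hm e => ⟨hm, by simpa [Fin.sum_univ_three] using e⟩
  obtain ⟨ε, hε, H⟩ := weight_tilt (fun x y z => ![x, y, z] ∈ NSupp f) (h.pos 0) (h.pos 1)
    (h.pos 2) (T := t) (fun x y z hm => by simpa [Fin.sum_univ_three] using h.le _ hm)
    (φ (Pi.single 0 1)) (φ (Pi.single 1 1)) (φ (Pi.single 2 1)) (φ (latt α))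
    (fun x y z hm e => by
      rw [← hval]
      rcases eq_or_ne ![x, y, z] α with e' | e'
      · rw [e']
      · exact (hφ _ (hlev x y z hm e) e').le)
  obtain ⟨p0, p1, p2, hH⟩ := H ε hε le_rfl
  set w : Fin 3 → ℝ := ![u 0 + ε * φ (Pi.single 0 1), u 1 + ε * φ (Pi.single 1 1),
    u 2 + ε * φ (Pi.single 2 1)] with hw
  have hws : ∀ ν : Fin 3 → ℕ, ∑ i, w i * (ν i : ℝ) = (u 0 + ε * φ (Pi.single 0 1)) * ν 0 +
      (u 1 + ε * φ (Pi.single 1 1)) * ν 1 + (u 2 + ε * φ (Pi.single 2 1)) * ν 2 := by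
    intro ν; rw [Fin.sum_univ_three]; simp [hw]
  have hat : ∀ ν ∈ NSupp f, (∑ i, w i * (ν i : ℝ) = t + ε * φ (latt α) ↔ ν = α) := by
    intro ν hν
    have hν' : ![ν 0, ν 1, ν 2] ∈ NSupp f := by rwa [vec_eta]
    constructor
    · intro e
      rw [hws] at e
      obtain ⟨e1, e2⟩ := (hH _ _ _ hν').2 e
      rw [← hval, vec_eta] at e2
      have hl := hlev _ _ _ hν' e1
      rw [vec_eta] at hl
      by_contra hne
      exact (hφ ν hl hne).ne' e2
    · rintro rfl
      have e1 := hα.2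
      have e2 := hval (ν 0) (ν 1) (ν 2)
      rw [vec_eta] at e2
      rw [Fin.sum_univ_three] at e1
      rw [hws, e2, ← e1]; ring
  have hm : IsMinW f w (t + ε * φ (latt α)) := by
    refine ⟨fun i => by fin_cases i <;> simpa [hw], fun ν hν => ?_, α, hα.1, (hat α hα.1).2 rfl⟩
    rw [hws]
    exact (hH _ _ _ (by rwa [vec_eta])).1
  refine ⟨w, hm.pos, ?_⟩
  have : level f w (t + ε * φ (latt α)) = {α} := by
    ext ν
    exact ⟨fun hν => (hat ν hν.1).1 hν.2, fun e => by
      obtain rfl : ν = α := e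
      exact ⟨hα.1, (hat ν hα.1).2 rfl⟩⟩
  rw [hm.face.2, this, Set.image_singleton, convexHull_singleton]

/-- A compact face is the convex hull of its vertices, by Krein–Milman. -/
lemma IsMinW.hull_vtx {f : (Fin 3 → ℂ) → ℂ} {u : Fin 3 → ℝ} {t : ℝ} (h : IsMinW f u t) :
    faceOf u (NDiag f) ⊆ convexHull ℝ (vtxOf f (faceOf u (NDiag f))) := by
  set S := faceOf u (NDiag f) with hS
  have e := h.face.2
  rw [← hS] at e
  have hfin := h.finite
  have hkm := closure_convexHull_extremePoints (s := S) (by rw [e]; exact hfin.isCompact_convexHull ℝ)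
    (by rw [e]; exact convex_convexHull ℝ _)
  have hext : S.extremePoints ℝ ⊆ latt '' level f u t := by
    rw [e]; exact extremePoints_convexHull_subset
  rw [((hfin.subset hext).isClosed_convexHull ℝ).closure_eq] at hkm
  calc S = convexHull ℝ (S.extremePoints ℝ) := hkm.symm
    _ ⊆ convexHull ℝ (vtxOf f S) := convexHull_mono fun A hA => ⟨h.vertex (by rwa [← e]), hA.1⟩

lemma vtx_lattice {f : (Fin 3 → ℂ) → ℂ} (hne : (NSupp f).Nonempty) {A : Fin 3 → ℝ}
    (hA : IsCompactFace f {A}) : ∃ α ∈ NSupp f, A = latt α := by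
  obtain ⟨w, hw, e⟩ := hA
  obtain ⟨t, ht⟩ := exists_isMinW hne hw
  obtain ⟨α, hα⟩ := ht.att
  have : latt α ∈ ({A} : Set (Fin 3 → ℝ)) := by
    rw [e, ht.face.2]; exact subset_convexHull ℝ _ ⟨α, hα, rfl⟩
  exact ⟨α, hα.1, (Set.mem_singleton_iff.1 this).symm⟩

/-! ### Dimension of faces, exceptional faces, and the edges of `𝒥` -/

lemma finrank_ge_of_spanning {F : Set (Fin 3 → ℝ)} (hne : F.Nonempty)
    (hF : ∀ v : Fin 3 → ℝ, (∀ x ∈ F, ∑ i, v i * x i = 0) → v = 0) :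
    2 ≤ Module.finrank ℝ (vectorSpan ℝ F) := by
  obtain ⟨x₀, hx₀⟩ := hne
  have htop : Submodule.span ℝ F = ⊤ := by
    by_contra hlt
    obtain ⟨φ, hφ, hle⟩ := Submodule.exists_le_ker_of_lt_top _ (lt_top_iff_ne_top.2 hlt)
    have hval : ∀ x, φ x = ∑ i, φ (Pi.single i 1) * x i := fun x => by
      conv_lhs => rw [pi_eq_sum_univ' x]
      simp [mul_comm]
    have h0 := hF (fun i => φ (Pi.single i 1)) fun x hx => by
      rw [← hval]; exact hle (Submodule.subset_span hx)
    refine hφ (LinearMap.ext fun x => ?_)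
    rw [hval]
    simp [fun i => congrFun h0 i]
  have hle : (⊤ : Submodule ℝ (Fin 3 → ℝ)) ≤ vectorSpan ℝ F ⊔ Submodule.span ℝ {x₀} := by
    rw [← htop, Submodule.span_le]
    intro x hx
    have : x = (x - x₀) + x₀ := by abel
    rw [this]
    exact Submodule.add_mem_sup (vsub_mem_vectorSpan ℝ hx hx₀)
      (Submodule.mem_span_singleton_self x₀)
  have h1 := Submodule.finrank_mono hle
  have h2 := Submodule.finrank_add_le_finrank_add_finrank (vectorSpan ℝ F)
    (Submodule.span ℝ {x₀})
  have h3 := finrank_span_le_card (R := ℝ) ({x₀} : Set (Fin 3 → ℝ))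
  simp only [finrank_top, Module.finrank_fin_fun, Set.toFinset_singleton,
    Finset.card_singleton] at h1 h3
  omega

lemma faceDim_convexHull (F : Set (Fin 3 → ℝ)) :
    faceDim (convexHull ℝ F) = Module.finrank ℝ (vectorSpan ℝ F) := by
  rw [faceDim, affineSpan_convexHull, direction_affineSpan]

/-- A face whose lattice points span the whole space is 2-dimensional. -/
lemma IsMinW.faceDim_two {f : (Fin 3 → ℂ) → ℂ} {u : Fin 3 → ℝ} {t : ℝ} (h : IsMinW f u t)
    (hF : ∀ v : Fin 3 → ℝ, (∀ ν ∈ level f u t, ∑ i, v i * (ν i : ℝ) = 0) → v = 0) :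
    faceDim (faceOf u (NDiag f)) = 2 := by
  rw [h.face.2, faceDim_convexHull]
  refine le_antisymm ?_ (finrank_ge_of_spanning (h.att.image _) fun v hv =>
    hF v fun ν hν => hv _ ⟨ν, hν, rfl⟩)
  -- the weight vanishes on all differences of points of the face
  have hle : vectorSpan ℝ (latt '' level f u t) ≤
      LinearMap.ker (Fintype.linearCombination ℝ u) := by
    rw [vectorSpan, Submodule.span_le]
    rintro _ ⟨_, ⟨μ, hμ, rfl⟩, _, ⟨ν, hν, rfl⟩, rfl⟩
    have h1 := hμ.2
    have h2 := hν.2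
    rw [Fin.sum_univ_three] at h1 h2
    simp only [vsub_eq_sub, SetLike.mem_coe, LinearMap.mem_ker, Fintype.linearCombination_apply,
      Fin.sum_univ_three, Pi.sub_apply, smul_eq_mul, latt]
    linarith
  have hlt : Module.finrank ℝ (vectorSpan ℝ (latt '' level f u t)) < 3 := by
    have := Submodule.finrank_lt (K := ℝ) (s := vectorSpan ℝ (latt '' level f u t)) (by
      intro htop
      rw [htop] at hle
      have := hle (Submodule.mem_top (x := Pi.single 0 1))
      simp [Fintype.linearCombination_apply, Fin.sum_univ_three] at this
      exact (h.pos 0).ne' this)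
    simpa using this
  omega

/-- A 2-dimensional exceptional face, in terms of its lattice points. -/
lemma exc_lattice {f : (Fin 3 → ℂ) → ℂ} (hf : IsIsolSing f) {u : Fin 3 → ℝ} {t : ℝ}
    (h : IsMinW f u t)
    (hF : ∀ v : Fin 3 → ℝ, (∀ ν ∈ level f u t, ∑ i, v i * (ν i : ℝ) = 0) → v = 0)
    {i : Fin 3} (hexc : ExcWrt f i (faceOf u (NDiag f))) :
    ∃ (ω : Fin 3 → ℕ) (j : Fin 3), j ≠ i ∧ ω ∈ level f u t ∧ 1 ≤ ω i ∧ ω j = 1 ∧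
      (∀ a, a ≠ i → a ≠ j → ω a = 0) ∧ ∀ ν ∈ level f u t, ν j = 0 ∨ ν = ω := by
  obtain ⟨W, ⟨hWv, hWS⟩, hdist, T, -, ⟨j, hji, hT⟩, hvtx⟩ := hexc
  have hne : (NSupp f).Nonempty := ⟨_, (h.att.some_mem).1⟩
  obtain ⟨ω, hω, rfl⟩ := vtx_lattice hne hWv
  have hωl : ω ∈ level f u t := ⟨hω, hWS.2.trans h.face.1⟩
  have hlat : ∀ ν ∈ level f u t, latt ν ∈ convexHull ℝ (vtxOf f (faceOf u (NDiag f))) :=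
    fun ν hν => h.hull_vtx (by rw [h.face.2]; exact subset_convexHull ℝ _ ⟨ν, hν, rfl⟩)
  have hv0 : ∀ A ∈ vtxOf f (faceOf u (NDiag f)), A ≠ latt ω → A j = 0 := by
    intro A hA hne
    have : A ∈ vtxOf f T := by rw [hvtx]; exact ⟨hA, hne⟩
    exact hT this.2
  have hd : ∑ a ∈ Finset.univ.erase i, ω a ^ 2 = 1 := by
    have := (Real.sqrt_eq_one).1 hdist
    simp only [latt] at this
    exact_mod_cast this
  have hd' : ω j ^ 2 + ∑ a ∈ (Finset.univ.erase i).erase j, ω a ^ 2 = 1 := by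
    rw [Finset.add_sum_erase (Finset.univ.erase i) (fun a => ω a ^ 2) (by simp [hji]), hd]
  have hω1 : ω j = 1 := by
    have hle : ω j ≤ 1 := by nlinarith [Nat.zero_le (∑ a ∈ (Finset.univ.erase i).erase j, ω a ^ 2)]
    have hne0 : ω j ≠ 0 := by
      intro h0
      -- otherwise the face would lie in the plane `xⱼ = 0`
      have hsub : convexHull ℝ (vtxOf f (faceOf u (NDiag f))) ⊆ {x : Fin 3 → ℝ | x j = 0} := by
        refine convexHull_min (fun A hA => ?_) ?_
        · rcases eq_or_ne A (latt ω) with rfl | hne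
          · simp [latt, h0]
          · exact hv0 A hA hne
        · intro x hx y hy a b _ _ _
          have hx : x j = 0 := hx
          have hy : y j = 0 := hy
          simp [hx, hy]
      have := congrFun (hF (Pi.single j 1) fun ν hν => by
        have h1 : (ν j : ℝ) = 0 := hsub (hlat ν hν)
        rw [Finset.sum_eq_single j] <;> simp +contextual [h1]) j
      simp at this
    omega
  have hrest : ∀ a, a ≠ i → a ≠ j → ω a = 0 := by
    intro a hai haj
    rw [hω1, one_pow] at hd'
    have hz : ∑ a ∈ (Finset.univ.erase i).erase j, ω a ^ 2 = 0 := by omega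
    have := Finset.sum_eq_zero_iff.1 hz a (by simp [hai, haj])
    simpa using this
  refine ⟨ω, j, hji, hωl, ?_, hω1, hrest, ?_⟩
  · have h2 := hf.two_le hω
    by_contra hlt
    have hi0 : ω i = 0 := by omega
    have : ω 0 + ω 1 + ω 2 = 1 := by
      rw [← Fin.sum_univ_three (f := ω), Finset.sum_eq_single j, hω1]
      · intro a _ haj
        rcases eq_or_ne a i with rfl | hai
        · exact hi0
        · exact hrest a hai haj
      · simp
    omega
  · intro ν hν
    have hsub : convexHull ℝ (vtxOf f (faceOf u (NDiag f))) ⊆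
        {x : Fin 3 → ℝ | -1 ≤ ∑ a, (Pi.single j (-1) : Fin 3 → ℝ) a * x a ∧
          (∑ a, (Pi.single j (-1) : Fin 3 → ℝ) a * x a = -1 → x ∈ ({latt ω} : Set _))} := by
      refine convexHull_min (fun A hA => ?_) (convex_halfspace_face _ _ (convex_singleton _))
      have e : ∀ x : Fin 3 → ℝ, ∑ a, (Pi.single j (-1) : Fin 3 → ℝ) a * x a = -x j := by
        intro x
        rw [Finset.sum_eq_single j] <;> simp +contextual
      change -1 ≤ ∑ a, (Pi.single j (-1) : Fin 3 → ℝ) a * A a ∧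
          (∑ a, (Pi.single j (-1) : Fin 3 → ℝ) a * A a = -1 → A ∈ ({latt ω} : Set _))
      rw [e]
      rcases eq_or_ne A (latt ω) with rfl | hne
      · simp [latt, hω1]
      · rw [hv0 A hA hne]; norm_num
    obtain ⟨h1, h2⟩ := hsub (hlat ν hν)
    have e : ∑ a, (Pi.single j (-1) : Fin 3 → ℝ) a * latt ν a = -(ν j : ℝ) := by
      rw [Finset.sum_eq_single j] <;> simp +contextual [latt]
    rw [e] at h1 h2
    have h3 : ν j ≤ 1 := by
      have : (ν j : ℝ) ≤ 1 := by linarith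
      exact_mod_cast this
    rcases Nat.lt_or_ge (ν j) 1 with h4 | h4
    · left; omega
    · right
      have h5 : ν j = 1 := le_antisymm h3 h4
      exact latt_injective (h2 (by rw [h5]; norm_num))

/-- The support of an isolated singularity all of whose compact 2-faces are exceptional satisfies
`NHyp`. -/
lemma nHyp_of_isolSing {f : (Fin 3 → ℂ) → ℂ} (hf : IsIsolSing f)
    (hyp : GammaK f 2 = ∅ ∨ GammaK f 2 = Ef f) : NHyp fun x y z => ![x, y, z] ∈ NSupp f where
  ord x y z h := by simpa using hf.two_le h
  nx := by
    obtain ⟨ν, hν, h⟩ := hf.exists_near_axis 0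
    refine ⟨ν 0, ν 1, ν 2, by rwa [vec_eta], ?_⟩
    rwa [show (univ.erase 0 : Finset (Fin 3)) = {1, 2} by decide, Finset.sum_pair (by decide)] at h
  ny := by
    obtain ⟨ν, hν, h⟩ := hf.exists_near_axis 1
    refine ⟨ν 0, ν 1, ν 2, by rwa [vec_eta], ?_⟩
    rwa [show (univ.erase 1 : Finset (Fin 3)) = {2, 0} by decide, Finset.sum_pair (by decide)] at h
  nz := by
    obtain ⟨ν, hν, h⟩ := hf.exists_near_axis 2
    refine ⟨ν 0, ν 1, ν 2, by rwa [vec_eta], ?_⟩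
    rwa [show (univ.erase 2 : Finset (Fin 3)) = {0, 1} by decide, Finset.sum_pair (by decide)] at h
  px := by
    obtain ⟨ν, hν, h⟩ := hf.exists_on_plane 0
    have e := vec_eta ν
    rw [h] at e
    exact ⟨ν 1, ν 2, by rwa [e]⟩
  py := by
    obtain ⟨ν, hν, h⟩ := hf.exists_on_plane 1
    have e := vec_eta ν
    rw [h] at e
    exact ⟨ν 0, ν 2, by rwa [e]⟩
  pz := by
    obtain ⟨ν, hν, h⟩ := hf.exists_on_plane 2
    have e := vec_eta ν
    rw [h] at e
    exact ⟨ν 0, ν 1, by rwa [e]⟩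
  exc a b c ha hb hc hle hR := by
    have hsum : ∀ ν : Fin 3 → ℕ, ∑ i, ![a, b, c] i * (ν i : ℝ) = a * ν 0 + b * ν 1 + c * ν 2 := by
      intro ν; simp [Fin.sum_univ_three]
    have hlev : ∀ x y z : ℕ, ![x, y, z] ∈ level f ![a, b, c] 1 ↔
        ![x, y, z] ∈ NSupp f ∧ a * x + b * y + c * z = 1 := by
      intro x y z
      change _ ∧ ∑ i, ![a, b, c] i * (![x, y, z] i : ℝ) = 1 ↔ _
      rw [hsum]; rfl
    have h : IsMinW f ![a, b, c] 1 := by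
      refine ⟨fun i => by fin_cases i <;> simpa, fun ν hν => ?_, ?_⟩
      · rw [hsum]; exact hle _ _ _ (by rwa [vec_eta])
      · by_contra hemp
        rw [Set.not_nonempty_iff_eq_empty] at hemp
        have := hR 1 0 0 (fun x y z h1 h2 => by
          have := (hlev x y z).2 ⟨h1, h2⟩
          rw [hemp] at this
          exact absurd this (Set.notMem_empty _))
        simp at this
    have hF : ∀ v : Fin 3 → ℝ, (∀ ν ∈ level f ![a, b, c] 1, ∑ i, v i * (ν i : ℝ) = 0) → v = 0 := by
      intro v hv
      obtain ⟨h0, h1, h2⟩ := hR (v 0) (v 1) (v 2) fun x y z m1 m2 => by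
        simpa [Fin.sum_univ_three] using hv _ ((hlev x y z).2 ⟨m1, m2⟩)
      funext i; fin_cases i <;> assumption
    have hmem : faceOf ![a, b, c] (NDiag f) ∈ GammaK f 2 :=
      ⟨⟨_, h.pos, rfl⟩, h.faceDim_two hF⟩
    rcases hyp with hyp | hyp
    · rw [hyp] at hmem; exact absurd hmem (Set.notMem_empty _)
    rw [hyp] at hmem
    obtain ⟨-, i, hi⟩ := hmem
    obtain ⟨ω, j, hji, hω, hp, hωj, hω0, hall⟩ := exc_lattice hf h hF hi
    have hω' : ω = ![ω 0, ω 1, ω 2] := (vec_eta ω).symm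
    have hG : ∀ {x y z : ℕ}, ω = ![x, y, z] →
        ![x, y, z] ∈ NSupp f ∧ a * x + b * y + c * z = 1 := fun e =>
      (hlev _ _ _).1 (e ▸ hω)
    have hall' : ∀ x y z : ℕ, ![x, y, z] ∈ NSupp f ∧ a * x + b * y + c * z = 1 →
        (![x, y, z] : Fin 3 → ℕ) j = 0 ∨ (x = ω 0 ∧ y = ω 1 ∧ z = ω 2) := by
      intro x y z m
      rcases hall _ ((hlev x y z).2 m) with e | e
      · exact Or.inl e
      · right
        exact ⟨congrFun e 0, congrFun e 1, congrFun e 2⟩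
    have z0 := hω0 0
    have z1 := hω0 1
    have z2 := hω0 2
    refine ⟨ω i, hp, ?_⟩
    fin_cases i <;> fin_cases j <;> simp at hji z0 z1 z2 hωj hall' hp ⊢
    · left
      rw [hωj, z2] at hω' hall'
      exact ⟨by simpa using hG hω', fun x y z m1 m2 => hall' x y z m1 m2⟩
    · right; left
      rw [hωj, z1] at hω' hall'
      exact ⟨by simpa using hG hω', fun x y z m1 m2 => hall' x y z m1 m2⟩
    · right; right; left
      rw [hωj, z2] at hω' hall'
      exact ⟨by simpa using hG hω', fun x y z m1 m2 => hall' x y z m1 m2⟩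
    · right; right; right; left
      rw [hωj, z0] at hω' hall'
      exact ⟨by simpa using hG hω', fun x y z m1 m2 => hall' x y z m1 m2⟩
    · right; right; right; right; left
      rw [hωj, z1] at hω' hall'
      exact ⟨by simpa using hG hω', fun x y z m1 m2 => hall' x y z m1 m2⟩
    · right; right; right; right; right
      rw [hωj, z0] at hω' hall'
      exact ⟨by simpa using hG hω', fun x y z m1 m2 => hall' x y z m1 m2⟩

/-! ### Existence and uniqueness of the edge -/

/-- The point `eᵢ + eⱼ`, written in terms of the third index `l`. -/
def diagPt (l : Fin 3) : Fin 3 → ℝ := fun a => if a = l then 0 else 1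

lemma segJ_iff {m : ℕ} {I : Set (Fin 3 → ℝ)} :
    segJ m I ↔ ∃ l : Fin 3, I = segment ℝ (diagPt l) (Pi.single l (m : ℝ)) := by
  have e : ∀ l : Fin 3, diagPt l = ![if 0 = l then 0 else 1, if 1 = l then 0 else 1,
      if 2 = l then 0 else 1] := fun l => by funext a; fin_cases a <;> rfl
  have s : ∀ l : Fin 3, (Pi.single l (m : ℝ) : Fin 3 → ℝ) = ![if 0 = l then (m : ℝ) else 0,
      if 1 = l then (m : ℝ) else 0, if 2 = l then (m : ℝ) else 0] := fun l => by
    funext a; fin_cases a <;> simp [Pi.single_apply]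
  simp only [e, s, Fin.exists_fin_succ, segJ]
  simp

/-- The weight of an edge has minimum `1` on the support, attained exactly at its two ends. -/
lemma EdgeAt.weight {f : (Fin 3 → ℂ) → ℂ} {i j l : Fin 3} {k : ℕ} {u : Fin 3 → ℝ}
    (h : EdgeAt f i j l k u) :
    level f u 1 = {Pi.single i 1 + Pi.single j 1, Pi.single l k} ∧ IsMinW f u 1 := by
  have e₁ : ∑ a, u a * ((Pi.single i 1 + Pi.single j 1 : Fin 3 → ℕ) a : ℝ) = 1 := by
    simp only [Pi.add_apply, Nat.cast_add, mul_add, Finset.sum_add_distrib]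
    rw [Finset.sum_eq_single i, Finset.sum_eq_single j]
    · simpa using h.sum
    all_goals simp +contextual
  have e₂ : ∑ a, u a * ((Pi.single l k : Fin 3 → ℕ) a : ℝ) = 1 := by
    rw [Finset.sum_eq_single l]
    · simpa using h.mul
    all_goals simp +contextual
  refine ⟨?_, h.pos, fun ν hν => ?_, _, h.mem₁, e₁⟩
  · ext ν
    constructor
    · rintro ⟨hν, e⟩
      rcases h.rest ν hν with t | t | t
      · exact Or.inl t
      · exact Or.inr t
      · exact absurd e t.ne'
    · rintro (rfl | rfl)
      exacts [⟨h.mem₁, e₁⟩, ⟨h.mem₂, e₂⟩]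
  · rcases h.rest ν hν with rfl | rfl | t
    · exact e₁.ge
    · exact e₂.ge
    · exact t.le

/-- The edge of `EdgeAt` as an element of `𝒥 ∩ Γ¹(f)`. -/
lemma EdgeAt.mem {f : (Fin 3 → ℂ) → ℂ} {i j l : Fin 3} {k : ℕ} {u : Fin 3 → ℝ}
    (h : EdgeAt f i j l k u) :
    segment ℝ (diagPt l) (Pi.single l (k : ℝ)) ∈ GammaK f 1 := by
  obtain ⟨hl, hm⟩ := h.weight
  have p₁ : latt (Pi.single i 1 + Pi.single j 1) = diagPt l := by
    have hij := h.hij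
    have hil := h.hil
    have hjl := h.hjl
    funext a
    rcases fin_three_cases hij hil hjl a with rfl | rfl | rfl <;>
      simp [latt, diagPt, *, Ne.symm]
  have p₂ : latt (Pi.single l k) = Pi.single l (k : ℝ) := by
    funext a
    by_cases ha : a = l <;> simp [latt, ha]
  have hS : faceOf u (NDiag f) = convexHull ℝ {diagPt l, Pi.single l (k : ℝ)} := by
    rw [hm.face.2, hl, Set.image_pair, p₁, p₂]
  rw [← convexHull_pair, ← hS]
  refine ⟨⟨u, h.pos, rfl⟩, ?_⟩
  rw [hS, faceDim_convexHull, vectorSpan_pair]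
  refine finrank_span_singleton fun h0 => ?_
  have := congrFun h0 i
  simp [diagPt, h.hil] at this

/-- At most one segment of `𝒥` is an edge: the weight of an edge in the axis `l` with intercept `k`
shows that a segment in another axis has a strictly larger intercept, and this is symmetric. -/
lemma segJ_unique {f : (Fin 3 → ℂ) → ℂ} (hne : (NSupp f).Nonempty) {l l' : Fin 3} {k k' : ℕ}
    (h : IsCompactFace f (segment ℝ (diagPt l) (Pi.single l (k : ℝ))))
    (h' : IsCompactFace f (segment ℝ (diagPt l') (Pi.single l' (k' : ℝ)))) :
    l = l' ∧ k = k' := by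
  -- values of the weight of one segment at the ends of both
  have key : ∀ {l l' : Fin 3} {k k' : ℕ},
      IsCompactFace f (segment ℝ (diagPt l) (Pi.single l (k : ℝ))) →
      IsCompactFace f (segment ℝ (diagPt l') (Pi.single l' (k' : ℝ))) →
      k ≤ k' ∧ (l ≠ l' → k < k') := by
    rintro l l' k k' ⟨u, hu, e⟩ ⟨u', hu', e'⟩
    obtain ⟨t, ht⟩ := exists_isMinW hne hu
    have hd : ∀ l, ∑ a, u a * diagPt l a = (∑ a, u a) - u l := by
      intro l
      rw [eq_sub_iff_add_eq, ← Finset.sum_erase_add _ _ (mem_univ l),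
        ← Finset.sum_erase_add univ u (mem_univ l)]
      simp only [diagPt, if_true, mul_zero, add_zero]
      congr 1
      exact Finset.sum_congr rfl fun a ha => by simp [Finset.ne_of_mem_erase ha]
    have hs : ∀ (l : Fin 3) (k : ℕ), ∑ a, u a * (Pi.single l (k : ℝ) : Fin 3 → ℝ) a = u l * k := by
      intro l k
      rw [Finset.sum_eq_single l] <;> simp +contextual
    have hge : ∀ x ∈ NDiag f, t ≤ ∑ a, u a * x a := by
      have : NDiag f ⊆ {x : Fin 3 → ℝ | t ≤ ∑ i, u i * x i ∧ (∑ i, u i * x i = t →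
          x ∈ (Set.univ : Set (Fin 3 → ℝ)))} := by
        refine convexHull_min ?_ (convex_halfspace_face u t convex_univ)
        rintro x ⟨ν, hν, hx⟩
        exact ⟨(ht.le ν hν).trans (Finset.sum_le_sum fun i _ =>
          mul_le_mul_of_nonneg_left (hx i) (hu i).le), fun _ => trivial⟩
      exact fun x hx => (this hx).1
    have m₁ : diagPt l ∈ faceOf u (NDiag f) := e ▸ left_mem_segment ℝ _ _
    have m₂ : Pi.single l (k : ℝ) ∈ faceOf u (NDiag f) := e ▸ right_mem_segment ℝ _ _
    have m₁' : diagPt l' ∈ NDiag f := by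
      have : diagPt l' ∈ faceOf u' (NDiag f) := e' ▸ left_mem_segment ℝ _ _
      exact this.1
    have m₂' : Pi.single l' (k' : ℝ) ∈ NDiag f := by
      have : Pi.single l' (k' : ℝ) ∈ faceOf u' (NDiag f) := e' ▸ right_mem_segment ℝ _ _
      exact this.1
    have v₁ := m₁.2
    have v₂ := m₂.2
    have v₁' := hge _ m₁'
    have v₂' := hge _ m₂'
    rw [ht.face.1] at v₁ v₂
    rw [hd] at v₁ v₁'
    rw [hs] at v₂ v₂'
    have ht0 : 0 < t := by
      rw [← v₁, sub_pos]
      obtain ⟨b, hb⟩ : ∃ b : Fin 3, b ≠ l := by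
        fin_cases l
        exacts [⟨1, by decide⟩, ⟨0, by decide⟩, ⟨0, by decide⟩]
      rw [← Finset.add_sum_erase _ _ (mem_univ l), lt_add_iff_pos_right]
      exact Finset.sum_pos (fun a _ => hu a) ⟨b, by simp [hb]⟩
    have hk0 : (0 : ℝ) < k := by
      by_contra hcon
      have := hu l
      nlinarith
    have hk0' : (0 : ℝ) < k' := by
      by_contra hcon
      have := hu l'
      nlinarith
    rcases eq_or_ne l l' with rfl | hl
    · refine ⟨?_, fun h => absurd rfl h⟩
      have : (k : ℝ) ≤ k' := le_of_mul_le_mul_left (v₂.le.trans v₂') (hu l)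
      exact_mod_cast this
    · have hlt : t < (∑ a, u a) - u l' := by
        refine lt_of_le_of_ne v₁' fun heq => ?_
        have hmem : diagPt l' ∈ segment ℝ (diagPt l) (Pi.single l (k : ℝ)) := by
          rw [e]
          exact ⟨m₁', by rw [hd, ht.face.1, heq]⟩
        -- points of the segment have equal coordinates off the axis `l`
        obtain ⟨b, hbl, hbl'⟩ : ∃ b : Fin 3, b ≠ l ∧ b ≠ l' :=
          (show ∀ l l' : Fin 3, ∃ b : Fin 3, b ≠ l ∧ b ≠ l' by decide) l l'
        obtain ⟨x, y, -, -, -, hxy⟩ := hmem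
        have h1 := congrFun hxy l'
        have h2 := congrFun hxy b
        simp [diagPt, hl.symm, hbl, hbl'] at h1 h2
        linarith
      have hul : u l' < u l := by linarith
      have : (k : ℝ) < k' := by
        by_contra hcon
        push Not at hcon
        have := mul_lt_mul_of_pos_right hul hk0'
        have := mul_le_mul_of_nonneg_left hcon (hu l).le
        linarith
      have : k < k' := by exact_mod_cast this
      exact ⟨this.le, fun _ => this⟩
  obtain ⟨a1, a2⟩ := key h h'
  obtain ⟨b1, b2⟩ := key h' h
  refine ⟨?_, le_antisymm a1 b1⟩
  by_contra hl
  have := a2 hl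
  omega

/-- The edge found by the combinatorial argument, in the form used for the estimates. -/
lemma exists_edgeAt {f : (Fin 3 → ℂ) → ℂ} (h : SomeEdge fun x y z => ![x, y, z] ∈ NSupp f) :
    ∃ i j l k u, EdgeAt f i j l k u := by
  have hv : ∀ x y z : ℕ, ![x, y, z] = Pi.single 0 x + Pi.single 1 y + Pi.single 2 z := by
    intro x y z; funext a; fin_cases a <;> simp
  have hx : ∀ (x y z : ℕ) (ν : Fin 3 → ℕ), ν 0 = x → ν 1 = y → ν 2 = z → ν = ![x, y, z] := by
    rintro _ _ _ ν rfl rfl rfl; exact (vec_eta ν).symm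
  rcases h with h | h | h
  · obtain ⟨a, b, c, k, ha, hb, hc, hk, h1, h2, hab, hck, H⟩ := h
    refine ⟨0, 1, 2, k, ![a, b, c], by decide, by decide, by decide, hk,
      fun i => by fin_cases i <;> simpa, hab, hck, by simpa [hv] using h1, by simpa [hv] using h2,
      fun ν hν => ?_⟩
    have hH := H (ν 0) (ν 1) (ν 2) (show ![ν 0, ν 1, ν 2] ∈ NSupp f by rwa [vec_eta])
    rcases hH with ⟨e0, e1, e2⟩ | ⟨e0, e1, e2⟩ | hlt
    · left; rw [hx _ _ _ ν e0 e1 e2, hv]; simp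
    · right; left; rw [hx _ _ _ ν e0 e1 e2, hv]; simp
    · right; right; simpa [Fin.sum_univ_three] using hlt
  · obtain ⟨a, b, c, k, ha, hb, hc, hk, h1, h2, hab, hck, H⟩ := h
    refine ⟨1, 2, 0, k, ![c, a, b], by decide, by decide, by decide, hk,
      fun i => by fin_cases i <;> simpa, hab, hck, by simpa [hv] using h1, by simpa [hv] using h2,
      fun ν hν => ?_⟩
    have hH := H (ν 1) (ν 2) (ν 0) (show ![ν 0, ν 1, ν 2] ∈ NSupp f by rwa [vec_eta])
    rcases hH with ⟨e0, e1, e2⟩ | ⟨e0, e1, e2⟩ | hlt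
    · left; rw [hx _ _ _ ν e2 e0 e1, hv]; simp
    · right; left; rw [hx _ _ _ ν e2 e0 e1, hv]; simp
    · right; right
      simp only [Fin.sum_univ_three, Matrix.cons_val]
      linarith
  · obtain ⟨a, b, c, k, ha, hb, hc, hk, h1, h2, hab, hck, H⟩ := h
    refine ⟨2, 0, 1, k, ![b, c, a], by decide, by decide, by decide, hk,
      fun i => by fin_cases i <;> simpa, hab, hck, by simpa [hv, add_comm] using h1,
      by simpa [hv] using h2, fun ν hν => ?_⟩
    have hH := H (ν 2) (ν 0) (ν 1) (show ![ν 0, ν 1, ν 2] ∈ NSupp f by rwa [vec_eta])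
    rcases hH with ⟨e0, e1, e2⟩ | ⟨e0, e1, e2⟩ | hlt
    · left; rw [hx _ _ _ ν e1 e2 e0, hv]; simp [add_comm]
    · right; left; rw [hx _ _ _ ν e1 e2 e0, hv]; simp
    · right; right
      simp only [Fin.sum_univ_three, Matrix.cons_val]
      linarith

/-- main theorem, part 1°: for an isolated nondegenerate singularity in
`ℂ³` with `Γ²(f) = ∅` or `Γ²(f) = E_f`, there is exactly one segment `I ∈ 𝒥 ∩ Γ¹(f)`,
and `£₀(f) = m(I) - 1` where `m(I_j^m) = m`. -/
theorem stmt17 (f : (Fin 3 → ℂ) → ℂ) (hf : IsIsolSing f) (hnd : Nondeg f)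
    (hyp : GammaK f 2 = ∅ ∨ GammaK f 2 = Ef f) :
    ∃ I, (InJ I ∧ I ∈ GammaK f 1) ∧
      (∀ I', InJ I' ∧ I' ∈ GammaK f 1 → I' = I) ∧
      ∃ m : ℕ, 2 ≤ m ∧ segJ m I ∧ loj f = (m : ℝ) - 1 := by
  obtain ⟨i, j, l, k, u, h⟩ := exists_edgeAt (nHyp_of_isolSing hf hyp).someEdge
  have hmem := h.mem
  have hseg : segJ k (segment ℝ (diagPt l) (Pi.single l (k : ℝ))) := segJ_iff.2 ⟨l, rfl⟩
  refine ⟨_, ⟨⟨k, h.hk, hseg⟩, hmem⟩, ?_, k, h.hk, hseg, h.loj_eq hf.1.1 hf.1.2.2.2⟩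
  rintro I' ⟨⟨k', -, hk'⟩, hI'⟩
  obtain ⟨l', rfl⟩ := segJ_iff.1 hk'
  obtain ⟨rfl, rfl⟩ := segJ_unique ⟨_, h.mem₁⟩ hI'.1 hmem.1
  rfl
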